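/- For all μ, ν, μ′, ν′ ∈ 𝒫_p(𝒳_1 × 𝒫_p(𝒳_2)) one has |CW̄_p(μ, ν) − CW̄_p(μ′, ν′)| ≤ AW̄_p(μ, μ′) + AW̄_p(ν, ν′); in particular CW̄_p is uniformly continuous on 𝒫_p(𝒳_1 × 𝒫_p(𝒳_2))² with respect to AW̄_p. -/

import Mathlib

open MeasureTheory ProbabilityTheory ENNReal Filter Topology

noncomputable section

namespace AWPaper

/-! ### Generic constructions -/

variable {α β : Type*}

/-- The set of couplings of two measures. -/
def Cpl [MeasurableSpace α] [MeasurableSpace β] (μ : Measure α) (ν : Measure β) :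
    Set (Measure (α × β)) :=
  {π | π.map Prod.fst = μ ∧ π.map Prod.snd = ν}

/-- The `p`-Wasserstein distance (with values in `ℝ≥0∞`) associated to an
`ℝ≥0∞`-valued distance function `d`. -/
def Wp [MeasurableSpace α] (p : ℝ) (d : α → α → ℝ≥0∞) (μ ν : Measure α) : ℝ≥0∞ :=
  ⨅ π ∈ Cpl μ ν, (∫⁻ z, d z.1 z.2 ^ p ∂π) ^ (1 / p)

/-- The topology generated by the open balls of an `ℝ≥0∞`-valued distance
function.  For a genuine metric this is the metric topology. -/
def ballTop (d : α → α → ℝ≥0∞) : TopologicalSpace α :=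
  TopologicalSpace.generateFrom {s | ∃ x ε, 0 < ε ∧ s = {y | d x y < ε}}

/-- The product distance of two `ℝ≥0∞`-valued distances, `ℓ^p`-style. -/
def prodDist (p : ℝ) (d₁ : α → α → ℝ≥0∞) (d₂ : β → β → ℝ≥0∞) :
    α × β → α × β → ℝ≥0∞ :=
  fun u v => (d₁ u.1 v.1 ^ p + d₂ u.2 v.2 ^ p) ^ (1 / p)

/-- Membership in the `p`-Wasserstein space: a probability measure with finite
`p`-th moment (w.r.t. the distance function `d`). -/
def MemPp [MeasurableSpace α] (p : ℝ) (d : α → α → ℝ≥0∞) (μ : Measure α) : Prop :=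
  IsProbabilityMeasure μ ∧ ∃ x₀, ∫⁻ x, d x₀ x ^ p ∂μ ≠ ∞

/-- The weak topology on measures induced by integration of bounded continuous
functions, for a given topology `τ` on the base space. -/
def weakTop [MeasurableSpace α] (τ : TopologicalSpace α) : TopologicalSpace (Measure α) :=
  TopologicalSpace.induced
    (fun μ => fun f : @BoundedContinuousFunction α ℝ τ _ => ∫ x, f x ∂μ)
    Pi.topologicalSpace

/-- The product topology built from two explicitly given topologies. -/
def prodTop (τ₁ : TopologicalSpace α) (τ₂ : TopologicalSpace β) : TopologicalSpace (α × β) :=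
  TopologicalSpace.induced Prod.fst τ₁ ⊓ TopologicalSpace.induced Prod.snd τ₂

/-- An everywhere-defined version of the disintegration kernel: it agrees with
`Measure.condKernel` on finite measures. -/
def condK [MeasurableSpace α] [MeasurableSpace β] [StandardBorelSpace β] [Nonempty β]
    (ρ : Measure (α × β)) : Kernel α β :=
  letI := Classical.dec (IsFiniteMeasure ρ)
  if h : IsFiniteMeasure ρ then @Measure.condKernel α β _ _ _ _ ρ h else 0

/-- The disintegration map `𝒫(A × B) → 𝒫(A × 𝒫(B))`. -/
def disint [MeasurableSpace α] [MeasurableSpace β] [StandardBorelSpace β] [Nonempty β]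
    (μ : Measure (α × β)) : Measure (α × Measure β) :=
  μ.map (fun z => (z.1, condK μ z.1))

/-- The intensity ("und") map `𝒫(A × 𝒫(B)) → 𝒫(A × B)`. -/
def und [MeasurableSpace α] [MeasurableSpace β] (μ : Measure (α × Measure β)) :
    Measure (α × β) :=
  μ.bind (fun z => (Measure.dirac z.1).prod z.2)

/-! ### Path spaces -/

variable {X : Type*} [MeasurableSpace X]

/-- The path-space distance `ρ̄((x_t),(y_t)) = (∑ ρ(x_t,y_t)^p)^{1/p}`. -/
def pathDist (p : ℝ) (d : X → X → ℝ≥0∞) {N : ℕ} :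
    (Fin N → X) → (Fin N → X) → ℝ≥0∞ :=
  fun x y => (∑ t, d (x t) (y t) ^ p) ^ (1 / p)

/-- The first `t` coordinates of a path. -/
def restr {N : ℕ} (t : ℕ) (h : t ≤ N) (x : Fin N → X) : Fin t → X :=
  fun s => x (Fin.castLE h s)

/-- The last `N - t` coordinates of a path. -/
def tailr {N : ℕ} (t : ℕ) (h : t ≤ N) (x : Fin N → X) : Fin (N - t) → X :=
  fun s => x ⟨t + s.1, by have := s.2; omega⟩

/-- A coupling `π` of two path measures is causal: for every `t` and Borel
`A ⊆ 𝒳^t`, `π((Y_1,…,Y_t) ∈ A | X) = π((Y_1,…,Y_t) ∈ A | X_1,…,X_t)` a.s. -/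
def Causal {N : ℕ} (π : Measure ((Fin N → X) × (Fin N → X))) : Prop :=
  ∀ (t : ℕ) (h : t ≤ N) (A : Set (Fin t → X)), MeasurableSet A →
    (π[fun z => A.indicator (fun _ => (1 : ℝ)) (restr t h z.2) |
        MeasurableSpace.comap Prod.fst inferInstance])
      =ᵐ[π]
    (π[fun z => A.indicator (fun _ => (1 : ℝ)) (restr t h z.2) |
        MeasurableSpace.comap (fun z => restr t h z.1) inferInstance])

/-- Bicausal couplings. -/
def Bicausal {N : ℕ} (π : Measure ((Fin N → X) × (Fin N → X))) : Prop :=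
  Causal π ∧ Causal (π.map Prod.swap)

/-- The causal Wasserstein "distance" `CW_p`. -/
def CW (p : ℝ) (d : X → X → ℝ≥0∞) {N : ℕ} (μ ν : Measure (Fin N → X)) : ℝ≥0∞ :=
  ⨅ π ∈ {π ∈ Cpl μ ν | Causal π}, (∫⁻ z, pathDist p d z.1 z.2 ^ p ∂π) ^ (1 / p)

/-- The symmetrized causal Wasserstein distance `SCW_p`. -/
def SCW (p : ℝ) (d : X → X → ℝ≥0∞) {N : ℕ} (μ ν : Measure (Fin N → X)) : ℝ≥0∞ :=
  max (CW p d μ ν) (CW p d ν μ)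

/-- The adapted (nested, bicausal) Wasserstein distance `AW_p`. -/
def AW (p : ℝ) (d : X → X → ℝ≥0∞) {N : ℕ} (μ ν : Measure (Fin N → X)) : ℝ≥0∞ :=
  ⨅ π ∈ {π ∈ Cpl μ ν | Bicausal π}, (∫⁻ z, pathDist p d z.1 z.2 ^ p ∂π) ^ (1 / p)

/-! ### Nested spaces (Pflug's nested distributions / Vershik's iterated spaces) -/

/-- A measurable space together with an `ℝ≥0∞`-valued distance. -/
structure QMS : Type 1 where
  carrier : Type
  inst : MeasurableSpace carrier
  dist : carrier → carrier → ℝ≥0∞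

/-- The nested sequence of spaces: `nest X _ d p 0 = 𝒳` (this is `𝒳_N`), and
`nest X _ d p (k+1) = 𝒳 × 𝒫(nest X _ d p k)` with the nested distance
`D = (ρ^p + 𝒲_p^p)^{1/p}`.  Thus `𝒳_1` (for `N = k+1` time points) is
`nest X _ d p k`. -/
def nest (X : Type) (mX : MeasurableSpace X) (d : X → X → ℝ≥0∞) (p : ℝ) : ℕ → QMS
  | 0 => ⟨X, mX, d⟩
  | (k + 1) =>
    let Q := nest X mX d p k
    ⟨X × @Measure Q.carrier Q.inst,
      @Prod.instMeasurableSpace _ _ mX (@Measure.instMeasurableSpace _ Q.inst),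
      fun a b => (d a.1 b.1 ^ p + (@Wp _ Q.inst p Q.dist a.2 b.2) ^ p) ^ (1 / p)⟩

section NMapSec

variable (Y : Type) [mY : MeasurableSpace Y] [TopologicalSpace Y] [PolishSpace Y]
  [BorelSpace Y] [Nonempty Y]

/-- The map `𝒩` sending the law of a process with `k+1` time steps to the
corresponding nested distribution, via iterated regular conditional laws. -/
def NMap (d : Y → Y → ℝ≥0∞) (p : ℝ) :
    ∀ k : ℕ, Measure (Fin (k + 1) → Y) →
      @Measure (nest Y mY d p k).carrier (nest Y mY d p k).inst
  | 0, μ =>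
    letI : MeasurableSpace (nest Y mY d p 0).carrier := (nest Y mY d p 0).inst
    μ.map (fun x => x 0)
  | (k + 1), μ =>
    letI : MeasurableSpace (nest Y mY d p k).carrier := (nest Y mY d p k).inst
    letI : MeasurableSpace (nest Y mY d p (k + 1)).carrier := (nest Y mY d p (k + 1)).inst
    (μ.map (fun x => x 0)).map
      (fun x₀ => (x₀, NMap d p k
        ((condK (μ.map (fun x => (x 0, fun s : Fin (k + 1) => x s.succ)))) x₀)))

end NMapSec

section PathStructures

variable {Y : Type*} [mY : MeasurableSpace Y]

/-- A process `L` is adapted: `L t` depends only on the first `t+1` coordinates. -/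
def AdaptedProc {N : ℕ} (L : Fin N → (Fin N → Y) → ℝ) : Prop :=
  ∀ (t : Fin N) (x y : Fin N → Y), (∀ s : Fin N, s ≤ t → x s = y s) → L t x = L t y

/-- `τ` is a stopping time of the canonical filtration on the path space. -/
def IsStopTime {N : ℕ} (τ : (Fin N → Y) → Fin N) : Prop :=
  ∀ t : Fin N,
    MeasurableSet[MeasurableSpace.comap (restr (X := Y) (t.1 + 1) t.2) inferInstance]
      {x | τ x = t}

/-- The optimal stopping value `v^L(μ)`. -/
def stopVal {N : ℕ} (L : Fin N → (Fin N → Y) → ℝ) (μ : Measure (Fin N → Y)) : ℝ :=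
  ⨅ τ : {τ : (Fin N → Y) → Fin N // IsStopTime τ}, ∫ x, L (τ.1 x) x ∂μ

variable [TopologicalSpace Y]

/-- `AC(X̄)`: adapted processes which are continuous and bounded. -/
def ACbdd {N : ℕ} (L : Fin N → (Fin N → Y) → ℝ) : Prop :=
  (∀ t, Continuous (L t)) ∧ AdaptedProc L ∧ ∃ C : ℝ, ∀ t x, |L t x| ≤ C

/-- `AC_p(X̄)`: adapted continuous processes of growth of order `p`. -/
def ACp (p : ℝ) (d : Y → Y → ℝ≥0∞) {N : ℕ} (L : Fin N → (Fin N → Y) → ℝ) : Prop :=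
  (∀ t, Continuous (L t)) ∧ AdaptedProc L ∧
    ∃ (C : ℝ) (x₀ : Fin N → Y), ∀ t x, |L t x| ≤ C * (1 + ((pathDist p d x₀ x) ^ p).toReal)

/-- The optimal stopping topology (weak version, bounded continuous rewards). -/
def stopTopW (N : ℕ) : TopologicalSpace (Measure (Fin N → Y)) :=
  ⨅ L : {L : Fin N → (Fin N → Y) → ℝ // ACbdd L},
    TopologicalSpace.induced (stopVal L.1) inferInstance

/-- The `𝒲_p`-optimal stopping topology. -/
def stopTopWp (p : ℝ) (d : Y → Y → ℝ≥0∞) (N : ℕ) :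
    TopologicalSpace (Measure (Fin N → Y)) :=
  ⨅ L : {L : Fin N → (Fin N → Y) → ℝ // ACp p d L},
    TopologicalSpace.induced (stopVal L.1) inferInstance

variable [PolishSpace Y] [BorelSpace Y] [Nonempty Y]

/-- Hellwig's map `I_t`, sending `μ` to the joint law of the first `t`
coordinates together with the conditional law of the remaining coordinates. -/
def infoMap (N t : ℕ) (h : t ≤ N) (μ : Measure (Fin N → Y)) :
    Measure ((Fin t → Y) × Measure (Fin (N - t) → Y)) :=
  μ.map (fun x => (restr t h x,
    condK (μ.map (fun y => (restr t h y, tailr t h y))) (restr t h x)))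

/-- Hellwig's information topology (weak version). -/
def infoTopW (N : ℕ) : TopologicalSpace (Measure (Fin N → Y)) :=
  ⨅ (t : ℕ) (_ : 1 ≤ t) (h : t ≤ N - 1),
    TopologicalSpace.induced (infoMap N t (le_trans h (Nat.sub_le N 1)))
      (weakTop (prodTop Pi.topologicalSpace (weakTop Pi.topologicalSpace)))

/-- The `𝒲_p`-information topology. -/
def infoTopWp (p : ℝ) (d : Y → Y → ℝ≥0∞) (N : ℕ) :
    TopologicalSpace (Measure (Fin N → Y)) :=
  ⨅ (t : ℕ) (_ : 1 ≤ t) (h : t ≤ N - 1),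
    TopologicalSpace.induced (infoMap N t (le_trans h (Nat.sub_le N 1)))
      (ballTop (Wp p (prodDist p (pathDist p d) (Wp p (pathDist p d)))))

/-- Aldous' prediction process `Z_t^μ` (as a function of the path). -/
def predict (N : ℕ) (μ : Measure (Fin N → Y)) (t : ℕ) (h : t ≤ N) :
    (Fin N → Y) → Measure (Fin N → Y) :=
  fun x => condK (μ.map (fun y => (restr t h y, y))) (restr t h x)

/-- Aldous' map `E`, sending `μ` to the joint law of the path together with its
prediction process. -/
def aldousMap (N : ℕ) (μ : Measure (Fin N → Y)) :
    Measure ((Fin N → Y) × (Fin (N + 1) → Measure (Fin N → Y))) :=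
  μ.map (fun x =>
    (x, fun t : Fin (N + 1) => predict N μ t.1 (Nat.lt_succ_iff.mp t.2) x))

/-- Aldous' extended weak topology. -/
def aldousTopW (N : ℕ) : TopologicalSpace (Measure (Fin N → Y)) :=
  TopologicalSpace.induced (aldousMap N)
    (weakTop (prodTop Pi.topologicalSpace
      (@Pi.topologicalSpace (Fin (N + 1)) (fun _ => Measure (Fin N → Y))
        (fun _ => weakTop Pi.topologicalSpace))))

/-- The extended `𝒲_p`-topology. -/
def aldousTopWp (p : ℝ) (d : Y → Y → ℝ≥0∞) (N : ℕ) :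
    TopologicalSpace (Measure (Fin N → Y)) :=
  TopologicalSpace.induced (aldousMap N)
    (ballTop (Wp p (prodDist p (pathDist p d)
      (fun Z Z' : Fin (N + 1) → Measure (Fin N → Y) =>
        (∑ t, Wp p (pathDist p d) (Z t) (Z' t) ^ p) ^ (1 / p)))))

end PathStructures

/-! ### The lifted two-time-point space `𝒳₁ × 𝒫_p(𝒳₂)` -/

section Lifted

variable {A B : Type*} [MeasurableSpace A] [MeasurableSpace B]

/-- The nested distance on `𝒳₁ × 𝒫_p(𝒳₂)`. -/
def liftDist (p : ℝ) (dA : A → A → ℝ≥0∞) (dB : B → B → ℝ≥0∞) :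
    (A × Measure B) → (A × Measure B) → ℝ≥0∞ :=
  fun u v => (dA u.1 v.1 ^ p + Wp p dB u.2 v.2 ^ p) ^ (1 / p)

/-- `η` is a version of the measure-valued conditional expectation
`E_γ[X̂₂ | Y⃗]` (i.e. the barycenter of a regular conditional law of `X̂₂`
given `Y⃗ = (Y₁, Ŷ₂)`). -/
def IsCondBar (γ : Measure ((A × Measure B) × (A × Measure B)))
    (η : (A × Measure B) × (A × Measure B) → Measure B) : Prop :=
  (∃ g : (A × Measure B) → Measure B, Measurable g ∧ ∀ z, η z = g z.2) ∧
  (∀ z, IsProbabilityMeasure (η z)) ∧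
  ∀ S : Set (A × Measure B), MeasurableSet S → ∀ E : Set B, MeasurableSet E →
    ∫⁻ z in {z | z.2 ∈ S}, η z E ∂γ = ∫⁻ z in {z | z.2 ∈ S}, z.1.2 E ∂γ

/-- `AW̄_p`, the `p`-Wasserstein distance on `𝒫_p(𝒳₁ × 𝒫_p(𝒳₂))`. -/
def AWbar (p : ℝ) (dA : A → A → ℝ≥0∞) (dB : B → B → ℝ≥0∞)
    (μ ν : Measure (A × Measure B)) : ℝ≥0∞ :=
  Wp p (liftDist p dA dB) μ ν

/-- `CW̄_p`, the lifted causal Wasserstein "distance". -/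
def CWbar (p : ℝ) (dA : A → A → ℝ≥0∞) (dB : B → B → ℝ≥0∞)
    (μ ν : Measure (A × Measure B)) : ℝ≥0∞ :=
  ⨅ γ ∈ Cpl μ ν, ⨅ η ∈ {η | IsCondBar γ η},
    (∫⁻ z, (dA z.1.1 z.2.1 ^ p + Wp p dB (η z) z.2.2 ^ p) ∂γ) ^ (1 / p)

/-- `SCW̄_p`, the symmetrization of `CW̄_p`. -/
def SCWbar (p : ℝ) (dA : A → A → ℝ≥0∞) (dB : B → B → ℝ≥0∞)
    (μ ν : Measure (A × Measure B)) : ℝ≥0∞ :=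
  max (CWbar p dA dB μ ν) (CWbar p dA dB ν μ)

/-- Membership in `𝒫_p(𝒳₁ × 𝒫_p(𝒳₂))`: a probability measure, concentrated on
`𝒳₁ × 𝒫_p(𝒳₂)`, with finite `p`-th moment for the nested distance. -/
def MemPpLift (p : ℝ) (dA : A → A → ℝ≥0∞) (dB : B → B → ℝ≥0∞)
    (μ : Measure (A × Measure B)) : Prop :=
  IsProbabilityMeasure μ ∧ (∀ᵐ z ∂μ, MemPp p dB z.2) ∧
    ∃ z₀ : A × Measure B, MemPp p dB z₀.2 ∧ ∫⁻ z, liftDist p dA dB z₀ z ^ p ∂μ ≠ ∞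

/-- Two-time-point causality: given a coupling `π` of measures on products
`A₁ × B₁` and `A₂ × B₂`, the conditional law of `Y₁` given `X = (X₁, X₂)`
coincides with the conditional law of `Y₁` given `X₁`. -/
def Causal2 {A₁ B₁ A₂ B₂ : Type*} [MeasurableSpace A₁] [MeasurableSpace B₁]
    [MeasurableSpace A₂] [MeasurableSpace B₂]
    (π : Measure ((A₁ × B₁) × (A₂ × B₂))) : Prop :=
  ∀ S : Set A₂, MeasurableSet S →
    (π[fun z => S.indicator (fun _ => (1 : ℝ)) z.2.1 |
        MeasurableSpace.comap Prod.fst inferInstance])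
      =ᵐ[π]
    (π[fun z => S.indicator (fun _ => (1 : ℝ)) z.2.1 |
        MeasurableSpace.comap (fun z => z.1.1) inferInstance])

/-- The two-time-point causal Wasserstein "distance" on `𝒫_p(𝒳₁ × 𝒳₂)`. -/
def CW2 (p : ℝ) (dA : A → A → ℝ≥0∞) (dB : B → B → ℝ≥0∞)
    (μ ν : Measure (A × B)) : ℝ≥0∞ :=
  ⨅ π ∈ {π ∈ Cpl μ ν | Causal2 π},
    (∫⁻ z, (dA z.1.1 z.2.1 ^ p + dB z.1.2 z.2.2 ^ p) ∂π) ^ (1 / p)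

end Lifted

open scoped NNReal

/-!
`CW̄` is dominated by `AW̄` and satisfies the triangle inequality; two applications of each give the
estimate. Both facts say that conditioning contracts `L^p` distances: `W_p ^ p` is jointly convex,
so by Jensen's inequality replacing random measures by their conditional barycenters does not
increase the `L^p` norm of their `W_p` distance. Applied to a coupling itself this is `CW̄ ≤ AW̄`.
For the triangle inequality, couplings of `(μ₁, μ₂)` and `(μ₂, μ₃)`, written as Markov kernels from
their second marginals, are composed; averaging the first one over the second is again such a
conditioning, and Minkowski's inequality concludes.

Joint convexity and measurability of `W_p` are obtained for finite spaces, where the transports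
form a compact polytope, and carried over by quantizing the space.
-/

lemma rpow_one_div_rpow {p : ℝ} (hp : p ≠ 0) (t : ℝ≥0∞) : (t ^ (1 / p)) ^ p = t := by
  rw [one_div, ENNReal.rpow_inv_rpow hp]

lemma rpow_rpow_one_div {p : ℝ} (hp : p ≠ 0) (t : ℝ≥0∞) : (t ^ p) ^ (1 / p) = t := by
  rw [one_div, ENNReal.rpow_rpow_inv hp]

/-- The Kantorovich optimal transport cost for a cost function `c`; the `p`-th power of `Wp p d` is
the case `c = d ^ p`. -/
def transportCost {S T : Type*} [MeasurableSpace S] [MeasurableSpace T] (c : S × T → ℝ≥0∞)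
    (m : Measure S) (n : Measure T) : ℝ≥0∞ :=
  ⨅ π ∈ Cpl m n, ∫⁻ z, c z ∂π

section CouplingBasics

variable {S T : Type*} [MeasurableSpace S] [MeasurableSpace T]

lemma Cpl.isProbabilityMeasure {m : Measure S} [IsProbabilityMeasure m] {n : Measure T}
    {π : Measure (S × T)} (hπ : π ∈ Cpl m n) : IsProbabilityMeasure π := by
  have : IsProbabilityMeasure (π.map Prod.fst) := hπ.1 ▸ inferInstance
  exact Measure.isProbabilityMeasure_of_map Prod.fst

lemma prod_mem_Cpl (m : Measure S) [IsProbabilityMeasure m] (n : Measure T)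
    [IsProbabilityMeasure n] : m.prod n ∈ Cpl m n :=
  ⟨Measure.fst_prod, Measure.snd_prod⟩

lemma transportCost_le {c : S × T → ℝ≥0∞} {m : Measure S} {n : Measure T} {π : Measure (S × T)}
    (hπ : π ∈ Cpl m n) : transportCost c m n ≤ ∫⁻ z, c z ∂π :=
  iInf₂_le π hπ

lemma Wp_rpow {p : ℝ} (hp : 0 < p) (d : S → S → ℝ≥0∞) (m n : Measure S) :
    Wp p d m n ^ p = transportCost (fun z => d z.1 z.2 ^ p) m n := by
  simp only [Wp, transportCost, ← ENNReal.orderIsoRpow_apply p hp, OrderIso.map_iInf]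
  simp only [ENNReal.orderIsoRpow_apply, rpow_one_div_rpow hp.ne']

end CouplingBasics

section KernelMass

variable {Ω S : Type*} [MeasurableSpace Ω] [MeasurableSpace S]

lemma measurable_real_apply (κ : Kernel Ω S) {s : Set S} (hs : MeasurableSet s) :
    Measurable fun ω => (κ ω).real s :=
  (κ.measurable_coe hs).ennreal_toReal

lemma integral_real_apply (Q : Measure Ω) (κ : Kernel Ω S) [IsFiniteKernel κ] {s : Set S}
    (hs : MeasurableSet s) : ∫ ω, (κ ω).real s ∂Q = (κ ∘ₘ Q).real s := by
  rw [measureReal_def, Measure.bind_apply hs κ.aemeasurable]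
  exact integral_toReal (κ.measurable_coe hs).aemeasurable (.of_forall fun ω => measure_lt_top _ _)

end KernelMass

section FiniteMeasure

variable {ι : Type*} [MeasurableSpace ι]

lemma ext_of_real_singleton [Countable ι] {m n : Measure ι} [IsFiniteMeasure m] [IsFiniteMeasure n]
    (h : ∀ i, m.real {i} = n.real {i}) : m = n :=
  Measure.ext_of_singleton fun i => (measureReal_eq_measureReal_iff).1 (h i)

lemma toReal_lintegral_eq_sum [Fintype ι] [MeasurableSingletonClass ι] (c : ι → ℝ≥0)
    (m : Measure ι) [IsFiniteMeasure m] : (∫⁻ i, c i ∂m).toReal = ∑ i, c i * m.real {i} := by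
  rw [lintegral_fintype, ENNReal.toReal_sum fun i _ => ENNReal.mul_ne_top coe_ne_top
    (measure_ne_top m _)]
  simp [measureReal_def]

open scoped Classical in
lemma real_map_singleton [MeasurableSingletonClass ι] {κ : Type*} [Fintype κ] [MeasurableSpace κ]
    [MeasurableSingletonClass κ] (π : Measure κ) [IsFiniteMeasure π] (f : κ → ι) (i : ι) :
    (π.map f).real {i} = ∑ z with f z = i, π.real {z} := by
  rw [map_measureReal_apply .of_discrete (measurableSet_singleton i), sum_measureReal_singleton]
  congr 1
  ext z
  simp

variable [Finite ι]

lemma lintegral_coe_ne_top_of_finite (c : ι → ℝ≥0) (m : Measure ι) [IsFiniteMeasure m] :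
    ∫⁻ i, c i ∂m ≠ ∞ :=
  (IsFiniteMeasure.lintegral_lt_top_of_bounded_to_ennreal m
    ((Finite.exists_le c).imp fun _ hC i => coe_le_coe.2 (hC i))).ne

lemma transportCost_ne_top_of_finite (c : ι × ι → ℝ≥0) (m n : Measure ι) [IsProbabilityMeasure m]
    [IsProbabilityMeasure n] : transportCost (fun z => (c z : ℝ≥0∞)) m n ≠ ∞ :=
  ne_top_of_le_ne_top (lintegral_coe_ne_top_of_finite c _) (transportCost_le (prod_mem_Cpl m n))

lemma lintegral_transportCost_ne_top_of_finite {Ω : Type*} [MeasurableSpace Ω]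
    (c : ι × ι → ℝ≥0) (Q : Measure Ω)
    [IsFiniteMeasure Q] (κ₁ κ₂ : Kernel Ω ι) [IsMarkovKernel κ₁] [IsMarkovKernel κ₂] :
    ∫⁻ ω, transportCost (fun z => (c z : ℝ≥0∞)) (κ₁ ω) (κ₂ ω) ∂Q ≠ ∞ := by
  obtain ⟨C, hC⟩ := Finite.exists_le c
  refine (IsFiniteMeasure.lintegral_lt_top_of_bounded_to_ennreal Q ⟨C, fun ω => ?_⟩).ne
  calc transportCost (fun z => (c z : ℝ≥0∞)) (κ₁ ω) (κ₂ ω)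
      ≤ ∫⁻ z, c z ∂(κ₁ ω).prod (κ₂ ω) := transportCost_le (prod_mem_Cpl _ _)
    _ ≤ ∫⁻ _, C ∂(κ₁ ω).prod (κ₂ ω) := lintegral_mono fun z => coe_le_coe.2 (hC z)
    _ = C := by simp

end FiniteMeasure

section FiniteTransport

variable {ι : Type*} [Fintype ι]

open scoped Classical in
/-- The two marginals and the total cost of a matrix of transport weights. -/
def transportMap (c : ι × ι → ℝ≥0) : (ι × ι → ℝ) →ₗ[ℝ] (ι → ℝ) × (ι → ℝ) × ℝ where
  toFun w := (fun i => ∑ z with z.1 = i, w z, fun j => ∑ z with z.2 = j, w z, ∑ z, c z * w z)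
  map_add' w w' := by ext <;> simp [Finset.sum_add_distrib, mul_add]
  map_smul' a w := by ext <;> simp [Finset.mul_sum, mul_left_comm]

/-- The triples consisting of two probability vectors and the cost of a transport between them. -/
def transportSet (c : ι × ι → ℝ≥0) : Set ((ι → ℝ) × (ι → ℝ) × ℝ) :=
  transportMap c '' stdSimplex ℝ (ι × ι)

lemma isCompact_transportSet (c : ι × ι → ℝ≥0) : IsCompact (transportSet c) :=
  (isCompact_stdSimplex ℝ (ι × ι)).image (transportMap c).continuous_of_finiteDimensional

lemma convex_transportSet (c : ι × ι → ℝ≥0) : Convex ℝ (transportSet c) :=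
  (convex_stdSimplex ℝ (ι × ι)).linear_image (transportMap c)

variable [MeasurableSpace ι] [MeasurableSingletonClass ι]

lemma Cpl.mem_transportSet (c : ι × ι → ℝ≥0) {m n : Measure ι} [IsProbabilityMeasure m]
    {π : Measure (ι × ι)} (hπ : π ∈ Cpl m n) :
    (fun i => m.real {i}, fun j => n.real {j}, (∫⁻ z, c z ∂π).toReal) ∈ transportSet c := by
  have := Cpl.isProbabilityMeasure hπ
  refine ⟨fun z => π.real {z}, ⟨fun z => measureReal_nonneg, ?_⟩, ?_⟩
  · rw [sum_measureReal_singleton]; simp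
  · simp only [← hπ.1, ← hπ.2, real_map_singleton, toReal_lintegral_eq_sum]
    rfl

lemma exists_Cpl_of_mem_transportSet {c : ι × ι → ℝ≥0} {m n : Measure ι} [IsFiniteMeasure m]
    [IsFiniteMeasure n] {t : ℝ}
    (h : (fun i => m.real {i}, fun j => n.real {j}, t) ∈ transportSet c) :
    ∃ π ∈ Cpl m n, IsFiniteMeasure π ∧ (∫⁻ z, c z ∂π).toReal = t := by
  obtain ⟨w, ⟨hw, -⟩, hwm⟩ := h
  let π : Measure (ι × ι) := Measure.count.withDensity fun z => ENNReal.ofReal (w z)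
  have hπw (z : ι × ι) : π.real {z} = w z := by
    simp [π, measureReal_def, withDensity_apply, hw z]
  have : IsFiniteMeasure π := isFiniteMeasure_withDensity (by simp [lintegral_fintype])
  refine ⟨π, ⟨ext_of_real_singleton fun i => ?_, ext_of_real_singleton fun j => ?_⟩, this, ?_⟩
  · simp only [real_map_singleton, hπw]
    exact congrFun (congrArg Prod.fst hwm) i
  · simp only [real_map_singleton, hπw]
    exact congrFun (congrArg (fun v => v.2.1) hwm) j
  · simp only [toReal_lintegral_eq_sum, hπw]
    exact congrArg (fun v => v.2.2) hwm

/-- The point of `transportSet c` given by two probability measures and their optimal cost. -/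
def optimalTriple (c : ι × ι → ℝ≥0) (m n : Measure ι) : (ι → ℝ) × (ι → ℝ) × ℝ :=
  (fun i => m.real {i}, fun j => n.real {j}, (transportCost (fun z => (c z : ℝ≥0∞)) m n).toReal)

lemma optimalTriple_mem_transportSet (c : ι × ι → ℝ≥0) (m n : Measure ι)
    [IsProbabilityMeasure m] [IsProbabilityMeasure n] : optimalTriple c m n ∈ transportSet c := by
  have marginals_closed : IsClosed {v : (ι → ℝ) × (ι → ℝ) × ℝ |
      v.1 = (fun i => m.real {i}) ∧ v.2.1 = fun j => n.real {j}} :=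
    (isClosed_eq (by fun_prop) (by fun_prop)).inter (isClosed_eq (by fun_prop) (by fun_prop))
  obtain ⟨⟨_, _, t⟩, ⟨ht, rfl, rfl⟩, hmin⟩ :=
    ((isCompact_transportSet c).inter_right marginals_closed).exists_isMinOn
      ⟨_, Cpl.mem_transportSet c (prod_mem_Cpl m n), rfl, rfl⟩
      (continuous_snd.comp continuous_snd).continuousOn
  obtain ⟨π, hπ, _, rfl⟩ := exists_Cpl_of_mem_transportSet ht
  convert ht using 1
  refine congrArg (fun t : ℝ≥0∞ => (_, _, t.toReal)) ?_
  refine le_antisymm (transportCost_le hπ) (le_iInf₂ fun π' hπ' => ?_)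
  have := Cpl.isProbabilityMeasure hπ'
  exact (ENNReal.toReal_le_toReal (lintegral_coe_ne_top_of_finite c π)
    (lintegral_coe_ne_top_of_finite c π')).1 (hmin ⟨Cpl.mem_transportSet c hπ', rfl, rfl⟩)

lemma toReal_transportCost_le_of_mem {c : ι × ι → ℝ≥0} {m n : Measure ι} [IsFiniteMeasure m]
    [IsFiniteMeasure n] {t : ℝ}
    (h : (fun i => m.real {i}, fun j => n.real {j}, t) ∈ transportSet c) :
    (transportCost (fun z => (c z : ℝ≥0∞)) m n).toReal ≤ t := by
  obtain ⟨π, hπ, _, rfl⟩ := exists_Cpl_of_mem_transportSet h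
  exact ENNReal.toReal_mono (lintegral_coe_ne_top_of_finite c π) (transportCost_le hπ)

end FiniteTransport

section FiniteTransportKernels

variable {Ω ι : Type*} [MeasurableSpace Ω] [MeasurableSpace ι] [MeasurableSingletonClass ι]

lemma measurable_transportCost_of_finite [Finite ι] (c : ι × ι → ℝ≥0) (κ₁ κ₂ : Kernel Ω ι)
    [IsMarkovKernel κ₁] [IsMarkovKernel κ₂] :
    Measurable fun ω => transportCost (fun z => (c z : ℝ≥0∞)) (κ₁ ω) (κ₂ ω) := by
  have := Fintype.ofFinite ι
  suffices Measurable fun ω => (transportCost (fun z => (c z : ℝ≥0∞)) (κ₁ ω) (κ₂ ω)).toReal by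
    simpa only [ENNReal.ofReal_toReal (transportCost_ne_top_of_finite c _ _)] using
      this.ennreal_ofReal
  refine measurable_of_Iic fun t => ?_
  let marginals (ω : Ω) : (ι → ℝ) × (ι → ℝ) := (fun i => (κ₁ ω).real {i}, fun j => (κ₂ ω).real {j})
  let attainable : Set ((ι → ℝ) × (ι → ℝ)) :=
    (fun v => (v.1, v.2.1)) '' (transportSet c ∩ {v | v.2.2 ≤ t})
  have marginals_measurable : Measurable marginals :=
    (measurable_pi_lambda _ fun i => measurable_real_apply κ₁ (measurableSet_singleton i)).prodMk
      (measurable_pi_lambda _ fun j => measurable_real_apply κ₂ (measurableSet_singleton j))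
  have attainable_closed : IsClosed attainable :=
    (((isCompact_transportSet c).inter_right (isClosed_le (by fun_prop) (by fun_prop))).image
      (by fun_prop)).isClosed
  convert marginals_measurable attainable_closed.measurableSet
  ext ω
  constructor
  · intro hω
    exact ⟨_, ⟨optimalTriple_mem_transportSet c (κ₁ ω) (κ₂ ω), hω⟩, rfl⟩
  · rintro ⟨⟨a, b, s⟩, ⟨hs, hst⟩, hab⟩
    obtain ⟨rfl, rfl⟩ := Prod.ext_iff.1 hab
    exact (toReal_transportCost_le_of_mem hs).trans hst

lemma measurable_optimalTriple [Finite ι] (c : ι × ι → ℝ≥0) (κ₁ κ₂ : Kernel Ω ι)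
    [IsMarkovKernel κ₁] [IsMarkovKernel κ₂] : Measurable fun ω => optimalTriple c (κ₁ ω) (κ₂ ω) :=
  (measurable_pi_lambda _ fun i => measurable_real_apply κ₁ (measurableSet_singleton i)).prodMk
    ((measurable_pi_lambda _ fun j => measurable_real_apply κ₂ (measurableSet_singleton j)).prodMk
      (measurable_transportCost_of_finite c κ₁ κ₂).ennreal_toReal)

lemma integrable_optimalTriple [Fintype ι] (c : ι × ι → ℝ≥0) (Q : Measure Ω) [IsFiniteMeasure Q]
    (κ₁ κ₂ : Kernel Ω ι) [IsMarkovKernel κ₁] [IsMarkovKernel κ₂] :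
    Integrable (fun ω => optimalTriple c (κ₁ ω) (κ₂ ω)) Q := by
  obtain ⟨C, hC⟩ := (isCompact_transportSet c).isBounded.exists_norm_le
  exact .of_bound (measurable_optimalTriple c κ₁ κ₂).aestronglyMeasurable C
    (.of_forall fun ω => hC _ (optimalTriple_mem_transportSet c _ _))

lemma integral_optimalTriple [Fintype ι] (c : ι × ι → ℝ≥0) (Q : Measure Ω) [IsFiniteMeasure Q]
    (κ₁ κ₂ : Kernel Ω ι) [IsMarkovKernel κ₁] [IsMarkovKernel κ₂] :
    ∫ ω, optimalTriple c (κ₁ ω) (κ₂ ω) ∂Q =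
      (fun i => (κ₁ ∘ₘ Q).real {i}, fun j => (κ₂ ∘ₘ Q).real {j},
        (∫⁻ ω, transportCost (fun z => (c z : ℝ≥0∞)) (κ₁ ω) (κ₂ ω) ∂Q).toReal) := by
  have integrable := integrable_optimalTriple c Q κ₁ κ₂
  rw [integral_pair integrable.fst integrable.snd,
    integral_pair integrable.snd.fst integrable.snd.snd]
  congr 2
  · ext i
    rw [eval_integral fun i => integrable.fst.eval i]
    exact integral_real_apply Q κ₁ (measurableSet_singleton i)
  · ext j
    rw [eval_integral fun j => integrable.snd.fst.eval j]
    exact integral_real_apply Q κ₂ (measurableSet_singleton j)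
  · exact integral_toReal (measurable_transportCost_of_finite c κ₁ κ₂).aemeasurable
      (.of_forall fun ω => (transportCost_ne_top_of_finite c _ _).lt_top)

lemma transportCost_comp_le_of_finite [Finite ι] (c : ι × ι → ℝ≥0) (Q : Measure Ω)
    [IsProbabilityMeasure Q] (κ₁ κ₂ : Kernel Ω ι) [IsMarkovKernel κ₁] [IsMarkovKernel κ₂] :
    transportCost (fun z => (c z : ℝ≥0∞)) (κ₁ ∘ₘ Q) (κ₂ ∘ₘ Q) ≤
      ∫⁻ ω, transportCost (fun z => (c z : ℝ≥0∞)) (κ₁ ω) (κ₂ ω) ∂Q := by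
  have := Fintype.ofFinite ι
  have integral_mem := (convex_transportSet c).integral_mem (isCompact_transportSet c).isClosed
    (.of_forall fun ω => optimalTriple_mem_transportSet c (κ₁ ω) (κ₂ ω))
    (integrable_optimalTriple c Q κ₁ κ₂)
  rw [integral_optimalTriple] at integral_mem
  exact (ENNReal.toReal_le_toReal (transportCost_ne_top_of_finite c _ _)
    (lintegral_transportCost_ne_top_of_finite c Q κ₁ κ₂)).1
    (toReal_transportCost_le_of_mem integral_mem)

end FiniteTransportKernels

section Gluing

variable {R S T : Type*} [MeasurableSpace R] [MeasurableSpace S] [MeasurableSpace T]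

lemma map_prodMap_id_compProd_comap (μ : Measure R) [SFinite μ] {f : R → S}
    (hf : Measurable f) (κ : Kernel S T) [IsSFiniteKernel κ] :
    (μ ⊗ₘ κ.comap f hf).map (Prod.map f id) = μ.map f ⊗ₘ κ := by
  ext s hs
  have hfid : Measurable (Prod.map f id : R × T → S × T) := hf.prodMap measurable_id
  rw [Measure.map_apply hfid hs, Measure.compProd_apply (hfid hs), Measure.compProd_apply hs,
    lintegral_map (Kernel.measurable_kernel_prodMk_left hs) hf]
  rfl

lemma exists_gluing [StandardBorelSpace T] [Nonempty T] {π₁ : Measure (R × S)} [IsFiniteMeasure π₁]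
    {π₂ : Measure (S × T)} [IsFiniteMeasure π₂] (h : π₁.snd = π₂.fst) :
    ∃ Γ : Measure ((R × S) × T), Γ.fst = π₁ ∧ Γ.map (Prod.map Prod.snd id) = π₂ := by
  refine ⟨π₁ ⊗ₘ π₂.condKernel.comap Prod.snd measurable_snd, Measure.fst_compProd _ _, ?_⟩
  rw [map_prodMap_id_compProd_comap, ← Measure.snd, h, π₂.disintegrate]

end Gluing

section Wasserstein

variable {S T : Type*} [MeasurableSpace S] [MeasurableSpace T] {p : ℝ}

lemma Wp_le {d : S → S → ℝ≥0∞} {m n : Measure S} {π : Measure (S × S)} (hπ : π ∈ Cpl m n) :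
    Wp p d m n ≤ (∫⁻ z, d z.1 z.2 ^ p ∂π) ^ (1 / p) :=
  iInf₂_le π hπ

lemma map_swap_mem_Cpl {m : Measure S} {n : Measure T} {π : Measure (S × T)} (hπ : π ∈ Cpl m n) :
    π.map Prod.swap ∈ Cpl n m :=
  ⟨Measure.fst_map_swap.trans hπ.2, Measure.snd_map_swap.trans hπ.1⟩

lemma Wp_comm {d : S → S → ℝ≥0∞} (hd : ∀ x y, d x y = d y x) (m n : Measure S) :
    Wp p d m n = Wp p d n m := by
  suffices h : ∀ m n : Measure S, Wp p d m n ≤ Wp p d n m from (h m n).antisymm (h n m)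
  refine fun m n => le_iInf₂ fun π hπ => (Wp_le (map_swap_mem_Cpl hπ)).trans_eq ?_
  have hswap : ∫⁻ z, d z.1 z.2 ^ p ∂π.map Prod.swap = ∫⁻ z, d z.2 z.1 ^ p ∂π :=
    lintegral_map_equiv (fun z : S × S => d z.1 z.2 ^ p) MeasurableEquiv.prodComm
  simp only [hswap, hd]

lemma Wp_map_le {d : S → S → ℝ≥0∞} {d' : T → T → ℝ≥0∞} {f : S → T} (hf : Measurable f)
    (hdf : ∀ x y, d' (f x) (f y) = d x y) (hd' : Measurable fun z : T × T => d' z.1 z.2)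
    (m n : Measure S) : Wp p d' (m.map f) (n.map f) ≤ Wp p d m n := by
  refine le_iInf₂ fun π hπ => ?_
  have hff : Measurable (Prod.map f f) := hf.prodMap hf
  refine (Wp_le (π := π.map (Prod.map f f)) ⟨?_, ?_⟩).trans_eq ?_
  · rw [← hπ.1, Measure.map_map measurable_fst hff, Measure.map_map hf measurable_fst]; rfl
  · rw [← hπ.2, Measure.map_map measurable_snd hff, Measure.map_map hf measurable_snd]; rfl
  · rw [lintegral_map (hd'.pow_const p) hff]
    simp [hdf]

end Wasserstein

section Metric

variable {B : Type*} [MetricSpace B] [SecondCountableTopology B] [MeasurableSpace B] [BorelSpace B]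
  {p : ℝ}

lemma Wp_map_self_le (m : Measure B) {f : B → B} (hf : Measurable f) :
    Wp p edist m (m.map f) ≤ (∫⁻ x, edist x (f x) ^ p ∂m) ^ (1 / p) := by
  have hidf : Measurable fun x => (x, f x) := measurable_id.prodMk hf
  refine (Wp_le (π := m.map fun x => (x, f x)) ⟨?_, ?_⟩).trans_eq ?_
  · simp [Measure.map_map measurable_fst hidf, Function.comp_def]
  · simp [Measure.map_map measurable_snd hidf, Function.comp_def]
  · rw [lintegral_map (by fun_prop) hidf]

lemma Wp_dirac (b : B) (m : Measure B) [IsProbabilityMeasure m] :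
    Wp p edist (.dirac b) m = (∫⁻ x, edist b x ^ p ∂m) ^ (1 / p) := by
  have lintegral_eq {π : Measure (B × B)} (hπ : π ∈ Cpl (.dirac b) m) :
      ∫⁻ z, edist z.1 z.2 ^ p ∂π = ∫⁻ x, edist b x ^ p ∂m := by
    have fst_eq : ∀ᵐ z ∂π, z.1 = b :=
      ae_of_ae_map measurable_fst.aemeasurable (p := (· = b)) (by simp [hπ.1])
    rw [← hπ.2, lintegral_map (by fun_prop) measurable_snd]
    exact lintegral_congr_ae (fst_eq.mono fun z hz => by simp only [hz])
  refine le_antisymm ((Wp_le (prod_mem_Cpl _ m)).trans_eq ?_) (le_iInf₂ fun π hπ => ?_)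
  · rw [lintegral_eq (prod_mem_Cpl _ m)]
  · rw [lintegral_eq hπ]

lemma Wp_dirac_ne_top_iff (hp : 1 ≤ p) (b : B) {m : Measure B} [IsProbabilityMeasure m] :
    Wp p edist (.dirac b) m ≠ ∞ ↔ ∫⁻ x, edist b x ^ p ∂m ≠ ∞ := by
  rw [Wp_dirac, Ne, Ne, ENNReal.rpow_eq_top_iff_of_pos (by positivity)]

variable [StandardBorelSpace B]

lemma Wp_triangle (hp : 1 ≤ p) (a b c : Measure B) [IsProbabilityMeasure a] :
    Wp p edist a c ≤ Wp p edist a b + Wp p edist b c := by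
  have := nonempty_of_isProbabilityMeasure a
  conv_rhs => simp only [Wp, ENNReal.iInf_add, ENNReal.add_iInf]
  refine le_iInf₂ fun π₂ hπ₂ => le_iInf₂ fun π₁ hπ₁ => ?_
  have := Cpl.isProbabilityMeasure hπ₁
  have : IsProbabilityMeasure b := hπ₁.2 ▸ Measure.isProbabilityMeasure_map (by fun_prop)
  have := Cpl.isProbabilityMeasure hπ₂
  obtain ⟨Γ, hΓ₁, hΓ₂⟩ := exists_gluing (π₁ := π₁) (π₂ := π₂) (hπ₁.2.trans hπ₂.1.symm)
  have hmem : Γ.map (fun w => (w.1.1, w.2)) ∈ Cpl a c := by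
    constructor
    · rw [Measure.map_map (by fun_prop) (by fun_prop), ← hπ₁.1, ← hΓ₁, Measure.fst,
        Measure.map_map (by fun_prop) (by fun_prop)]
      rfl
    · rw [Measure.map_map (by fun_prop) (by fun_prop), ← hπ₂.2, ← hΓ₂,
        Measure.map_map (by fun_prop) (by fun_prop)]
      rfl
  calc Wp p edist a c
      ≤ (∫⁻ w, edist w.1.1 w.2 ^ p ∂Γ) ^ (1 / p) :=
        (Wp_le hmem).trans_eq (by rw [lintegral_map (by fun_prop) (by fun_prop)])
    _ ≤ (∫⁻ w, (edist w.1.1 w.1.2 + edist w.1.2 w.2) ^ p ∂Γ) ^ (1 / p) := by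
        gcongr with w
        exact edist_triangle _ _ _
    _ ≤ (∫⁻ w, edist w.1.1 w.1.2 ^ p ∂Γ) ^ (1 / p) + (∫⁻ w, edist w.1.2 w.2 ^ p ∂Γ) ^ (1 / p) :=
        ENNReal.lintegral_Lp_add_le (by fun_prop) (by fun_prop) hp
    _ = (∫⁻ z, edist z.1 z.2 ^ p ∂π₁) ^ (1 / p) + (∫⁻ z, edist z.1 z.2 ^ p ∂π₂) ^ (1 / p) := by
        rw [← hΓ₁, ← hΓ₂, Measure.fst, lintegral_map (by fun_prop) (by fun_prop),
          lintegral_map (by fun_prop) (by fun_prop)]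
        rfl

lemma memPp_iff_lintegral_ne_top (hp : 1 ≤ p) (b : B) {m : Measure B} :
    MemPp p edist m ↔ IsProbabilityMeasure m ∧ ∫⁻ x, edist b x ^ p ∂m ≠ ∞ := by
  refine and_congr_right fun _ => ⟨fun ⟨x, hx⟩ => ?_, fun h => ⟨b, h⟩⟩
  rw [← Wp_dirac_ne_top_iff hp] at hx ⊢
  refine ne_top_of_le_ne_top (ENNReal.add_ne_top.2 ⟨?_, hx⟩)
    (Wp_triangle hp (.dirac b) (.dirac x) m)
  rw [Wp_dirac_ne_top_iff hp, lintegral_dirac]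
  exact ENNReal.rpow_ne_top_of_nonneg (by positivity) (edist_ne_top _ _)

end Metric

lemma lintegral_Lp_add_add_le {Ω : Type*} [MeasurableSpace Ω] {p : ℝ} (hp : 1 ≤ p) {Q : Measure Ω}
    {f g h : Ω → ℝ≥0∞} (hf : AEMeasurable f Q) (hg : AEMeasurable g Q) (hh : AEMeasurable h Q) :
    (∫⁻ ω, (f ω + g ω + h ω) ^ p ∂Q) ^ (1 / p) ≤
      (∫⁻ ω, f ω ^ p ∂Q) ^ (1 / p) + (∫⁻ ω, g ω ^ p ∂Q) ^ (1 / p) +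
        (∫⁻ ω, h ω ^ p ∂Q) ^ (1 / p) :=
  (ENNReal.lintegral_Lp_add_le (hf.add hg) hh hp).trans
    (add_le_add_left (ENNReal.lintegral_Lp_add_le hf hg hp) _)

section FiniteMetric

variable {Ω : Type*} [MeasurableSpace Ω] {F : Type*} [PseudoMetricSpace F]
  [MeasurableSpace F] {p : ℝ}

lemma Wp_eq_transportCost_rpow (hp : 1 ≤ p) (m n : Measure F) :
    Wp p edist m n =
      transportCost (fun z => ((nndist z.1 z.2 ^ p : ℝ≥0) : ℝ≥0∞)) m n ^ (1 / p) := by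
  have cost_eq (z : F × F) : ((nndist z.1 z.2 ^ p : ℝ≥0) : ℝ≥0∞) = edist z.1 z.2 ^ p := by
    rw [edist_nndist, ENNReal.coe_rpow_of_nonneg _ (by positivity)]
  simp only [cost_eq]
  rw [← Wp_rpow (by positivity) edist, rpow_rpow_one_div (by positivity)]

variable [Finite F] [MeasurableSingletonClass F]

lemma measurable_Wp_of_finite (hp : 1 ≤ p) (κ₁ κ₂ : Kernel Ω F) [IsMarkovKernel κ₁]
    [IsMarkovKernel κ₂] : Measurable fun ω => Wp p edist (κ₁ ω) (κ₂ ω) := by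
  simp only [Wp_eq_transportCost_rpow hp]
  exact (measurable_transportCost_of_finite _ κ₁ κ₂).pow_const _

lemma Wp_comp_le_of_finite (hp : 1 ≤ p) (Q : Measure Ω) [IsProbabilityMeasure Q]
    (κ₁ κ₂ : Kernel Ω F) [IsMarkovKernel κ₁] [IsMarkovKernel κ₂] :
    Wp p edist (κ₁ ∘ₘ Q) (κ₂ ∘ₘ Q) ≤ (∫⁻ ω, Wp p edist (κ₁ ω) (κ₂ ω) ^ p ∂Q) ^ (1 / p) := by
  simp only [Wp_eq_transportCost_rpow hp, rpow_one_div_rpow (by positivity : p ≠ 0)]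
  gcongr
  exact transportCost_comp_le_of_finite _ Q κ₁ κ₂

end FiniteMetric

section Quantization

variable {B : Type*} [MeasurableSpace B] {p : ℝ}

/-- A simple function with its codomain restricted to its finite range, which makes the problem of
transporting the image measures a finite one. -/
def quantize (f : SimpleFunc B B) (x : B) : f.range := ⟨f x, f.mem_range_self x⟩

lemma measurable_quantize (f : SimpleFunc B B) : Measurable (quantize f) :=
  f.measurable.subtype_mk

variable [MetricSpace B]

/-- The `L^p` distance under `m` between the identity and its quantization by `f`. -/
def quantError (p : ℝ) (f : SimpleFunc B B) (m : Measure B) : ℝ≥0∞ :=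
  (∫⁻ x, edist x (f x) ^ p ∂m) ^ (1 / p)

variable [SecondCountableTopology B] [BorelSpace B]

lemma Wp_map_quantize_le (hp : 1 ≤ p) (f : SimpleFunc B B) (m n : Measure B) :
    Wp p edist (m.map (quantize f)) (n.map (quantize f)) ≤
      quantError p f m + Wp p edist m n + quantError p f n := by
  conv_rhs => simp only [Wp, ENNReal.iInf_add, ENNReal.add_iInf]
  refine le_iInf₂ fun π hπ => ?_
  have hq := measurable_quantize f
  calc Wp p edist (m.map (quantize f)) (n.map (quantize f))
      ≤ Wp p (fun x y => edist (f x) (f y)) m n := Wp_map_le hq (fun _ _ => rfl) .of_discrete m n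
    _ ≤ (∫⁻ z, edist (f z.1) (f z.2) ^ p ∂π) ^ (1 / p) := Wp_le hπ
    _ ≤ (∫⁻ z, (edist z.1 (f z.1) + edist z.1 z.2 + edist z.2 (f z.2)) ^ p ∂π) ^ (1 / p) := by
        gcongr with z
        rw [edist_comm z.1 (f z.1)]
        exact edist_triangle4 _ _ _ _
    _ ≤ (∫⁻ z, edist z.1 (f z.1) ^ p ∂π) ^ (1 / p) + (∫⁻ z, edist z.1 z.2 ^ p ∂π) ^ (1 / p) +
          (∫⁻ z, edist z.2 (f z.2) ^ p ∂π) ^ (1 / p) :=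
        lintegral_Lp_add_add_le hp (by fun_prop) (by fun_prop) (by fun_prop)
    _ = quantError p f m + (∫⁻ z, edist z.1 z.2 ^ p ∂π) ^ (1 / p) + quantError p f n := by
        simp only [quantError]
        rw [← hπ.1, ← hπ.2, lintegral_map (by fun_prop) (by fun_prop),
          lintegral_map (by fun_prop) (by fun_prop)]

variable [StandardBorelSpace B]

lemma Wp_le_quantize (hp : 1 ≤ p) (f : SimpleFunc B B) (m n : Measure B) [IsProbabilityMeasure m]
    [IsProbabilityMeasure n] :
    Wp p edist m n ≤ quantError p f m + Wp p edist (m.map (quantize f)) (n.map (quantize f)) +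
      quantError p f n := by
  have := Measure.isProbabilityMeasure_map (μ := m) f.measurable.aemeasurable
  have map_val (m : Measure B) : (m.map (quantize f)).map Subtype.val = m.map f :=
    Measure.map_map measurable_subtype_coe (measurable_quantize f)
  calc Wp p edist m n
      ≤ Wp p edist m (m.map f) + Wp p edist (m.map f) (n.map f) + Wp p edist (n.map f) n := by
        rw [add_assoc]
        exact (Wp_triangle hp _ (m.map f) _).trans
          (add_le_add_right (Wp_triangle hp _ (n.map f) _) _)
    _ ≤ quantError p f m + Wp p edist (m.map (quantize f)) (n.map (quantize f)) +
          quantError p f n := by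
        rw [Wp_comm edist_comm (n.map f) n, ← map_val m, ← map_val n]
        gcongr
        · rw [map_val]
          exact Wp_map_self_le m f.measurable
        · exact Wp_map_le measurable_subtype_coe (fun _ _ => rfl) (by fun_prop) _ _
        · rw [map_val]
          exact Wp_map_self_le n f.measurable

variable [Nonempty B]

/-- The quantizer sending a point to a closest one among the first `N + 1` points of a dense
sequence. -/
def denseQuantizer (B : Type*) [MetricSpace B] [SecondCountableTopology B] [MeasurableSpace B]
    [BorelSpace B] [Nonempty B] (N : ℕ) : SimpleFunc B B :=
  SimpleFunc.nearestPt (TopologicalSpace.denseSeq B) N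

lemma tendsto_quantError (hp : 1 ≤ p) {m : Measure B} (hm : MemPp p edist m) :
    Tendsto (fun N => quantError p (denseQuantizer B N) m) atTop (𝓝 0) := by
  have p_pos : 0 < p := by positivity
  let b := TopologicalSpace.denseSeq B 0
  have dist_le (N : ℕ) (x : B) : edist x (denseQuantizer B N x) ≤ edist b x := by
    rw [edist_comm]
    exact SimpleFunc.edist_nearestPt_le _ x N.zero_le
  have moment_ne_top : ∫⁻ x, edist b x ^ p ∂m ≠ ∞ := ((memPp_iff_lintegral_ne_top hp b).1 hm).2
  have lintegral_tendsto :
      Tendsto (fun N => ∫⁻ x, edist x (denseQuantizer B N x) ^ p ∂m) atTop (𝓝 0) := by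
    rw [← lintegral_zero (μ := m)]
    refine tendsto_lintegral_of_dominated_convergence _ (fun N => by fun_prop)
      (fun N => .of_forall fun x => ENNReal.rpow_le_rpow (dist_le N x) p_pos.le) moment_ne_top
      (.of_forall fun x => ?_)
    have edist_tendsto : Tendsto (fun N => edist x (denseQuantizer B N x)) atTop (𝓝 0) := by
      rw [← edist_self x]
      exact tendsto_const_nhds.edist (SimpleFunc.tendsto_nearestPt
        ((TopologicalSpace.denseRange_denseSeq B).closure_range ▸ Set.mem_univ x))
    simpa [p_pos] using edist_tendsto.ennrpow_const p
  simpa [p_pos, quantError] using lintegral_tendsto.ennrpow_const (1 / p)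

lemma tendsto_Wp_map_quantize (hp : 1 ≤ p) {m n : Measure B} (hm : MemPp p edist m)
    (hn : MemPp p edist n) :
    Tendsto (fun N => Wp p edist (m.map (quantize (denseQuantizer B N)))
      (n.map (quantize (denseQuantizer B N)))) atTop (𝓝 (Wp p edist m n)) := by
  have := hm.1
  have := hn.1
  let error (N : ℕ) : ℝ≥0∞ :=
    quantError p (denseQuantizer B N) m + quantError p (denseQuantizer B N) n
  have error_tendsto : Tendsto error atTop (𝓝 0) := by
    simpa using (tendsto_quantError hp hm).add (tendsto_quantError hp hn)
  have lower := ENNReal.Tendsto.sub (tendsto_const_nhds (x := Wp p edist m n)) error_tendsto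
    (.inr zero_ne_top)
  have upper := (tendsto_const_nhds (x := Wp p edist m n)).add error_tendsto
  rw [tsub_zero] at lower
  rw [add_zero] at upper
  refine tendsto_of_tendsto_of_tendsto_of_le_of_le lower upper (fun N => ?_) (fun N => ?_)
  · exact tsub_le_iff_right.2 ((Wp_le_quantize hp (denseQuantizer B N) m n).trans_eq (by ring))
  · exact (Wp_map_quantize_le hp (denseQuantizer B N) m n).trans_eq (by ring)

end Quantization

section WassersteinKernels

variable {Ω B : Type*} [MeasurableSpace Ω] [MetricSpace B] [SecondCountableTopology B]
  [MeasurableSpace B] [BorelSpace B] {p : ℝ}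

lemma ae_memPp_of_comp {Q : Measure Ω} {κ : Kernel Ω B} [IsMarkovKernel κ]
    (h : MemPp p edist (κ ∘ₘ Q)) : ∀ᵐ ω ∂Q, MemPp p edist (κ ω) := by
  obtain ⟨_, x₀, hx₀⟩ := h
  rw [Measure.lintegral_bind κ.aemeasurable (by fun_prop)] at hx₀
  have := ae_lt_top' (by fun_prop) hx₀
  filter_upwards [this] with ω hω using ⟨inferInstance, x₀, hω.ne⟩

lemma quantError_comp (hp : 1 ≤ p) (f : SimpleFunc B B) (Q : Measure Ω) (κ : Kernel Ω B) :
    quantError p f (κ ∘ₘ Q) = (∫⁻ ω, quantError p f (κ ω) ^ p ∂Q) ^ (1 / p) := by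
  simp only [quantError, rpow_one_div_rpow (by positivity : p ≠ 0)]
  rw [Measure.lintegral_bind κ.aemeasurable (by fun_prop)]

lemma measurable_quantError (f : SimpleFunc B B) (κ : Kernel Ω B) :
    Measurable fun ω => quantError p f (κ ω) :=
  (Measurable.lintegral_kernel (by fun_prop)).pow_const _

lemma Wp_comp_map_quantize_le (hp : 1 ≤ p) (f : SimpleFunc B B) (Q : Measure Ω)
    [IsProbabilityMeasure Q] (κ₁ κ₂ : Kernel Ω B) [IsMarkovKernel κ₁] [IsMarkovKernel κ₂] :
    Wp p edist ((κ₁ ∘ₘ Q).map (quantize f)) ((κ₂ ∘ₘ Q).map (quantize f)) ≤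
      (∫⁻ ω, Wp p edist ((κ₁ ω).map (quantize f)) ((κ₂ ω).map (quantize f)) ^ p ∂Q) ^ (1 / p) := by
  have hq := measurable_quantize f
  have := Kernel.IsMarkovKernel.map κ₁ hq
  have := Kernel.IsMarkovKernel.map κ₂ hq
  simpa only [Measure.map_comp _ _ hq, Kernel.map_apply _ hq] using
    Wp_comp_le_of_finite hp Q (κ₁.map (quantize f)) (κ₂.map (quantize f))

variable [StandardBorelSpace B] [Nonempty B]

lemma aemeasurable_Wp (hp : 1 ≤ p) {Q : Measure Ω} {κ₁ κ₂ : Kernel Ω B} [IsMarkovKernel κ₁]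
    [IsMarkovKernel κ₂] (h₁ : ∀ᵐ ω ∂Q, MemPp p edist (κ₁ ω)) (h₂ : ∀ᵐ ω ∂Q, MemPp p edist (κ₂ ω)) :
    AEMeasurable (fun ω => Wp p edist (κ₁ ω) (κ₂ ω)) Q := by
  have measurable_quantized (N : ℕ) : Measurable fun ω =>
      Wp p edist ((κ₁ ω).map (quantize (denseQuantizer B N)))
        ((κ₂ ω).map (quantize (denseQuantizer B N))) := by
    have hq := measurable_quantize (denseQuantizer B N)
    have := Kernel.IsMarkovKernel.map κ₁ hq
    have := Kernel.IsMarkovKernel.map κ₂ hq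
    simpa only [Kernel.map_apply _ hq] using measurable_Wp_of_finite hp
      (κ₁.map (quantize (denseQuantizer B N))) (κ₂.map (quantize (denseQuantizer B N)))
  refine aemeasurable_of_tendsto_metrizable_ae atTop
    (fun N => (measurable_quantized N).aemeasurable) ?_
  filter_upwards [h₁, h₂] with ω hω₁ hω₂ using tendsto_Wp_map_quantize hp hω₁ hω₂

lemma Wp_comp_le (hp : 1 ≤ p) {Q : Measure Ω} [IsProbabilityMeasure Q] {κ₁ κ₂ : Kernel Ω B}
    [IsMarkovKernel κ₁] [IsMarkovKernel κ₂] (h₁ : MemPp p edist (κ₁ ∘ₘ Q))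
    (h₂ : MemPp p edist (κ₂ ∘ₘ Q)) :
    Wp p edist (κ₁ ∘ₘ Q) (κ₂ ∘ₘ Q) ≤ (∫⁻ ω, Wp p edist (κ₁ ω) (κ₂ ω) ^ p ∂Q) ^ (1 / p) := by
  have W_aemeasurable := aemeasurable_Wp hp (ae_memPp_of_comp h₁) (ae_memPp_of_comp h₂)
  have quantized_le (N : ℕ) := (Wp_comp_map_quantize_le hp (denseQuantizer B N) Q κ₁ κ₂).trans <|
    calc (∫⁻ ω, Wp p edist ((κ₁ ω).map (quantize (denseQuantizer B N)))
            ((κ₂ ω).map (quantize (denseQuantizer B N))) ^ p ∂Q) ^ (1 / p)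
        ≤ (∫⁻ ω, (quantError p (denseQuantizer B N) (κ₁ ω) + Wp p edist (κ₁ ω) (κ₂ ω) +
            quantError p (denseQuantizer B N) (κ₂ ω)) ^ p ∂Q) ^ (1 / p) := by
          gcongr with ω
          exact Wp_map_quantize_le hp _ _ _
      _ ≤ (∫⁻ ω, quantError p (denseQuantizer B N) (κ₁ ω) ^ p ∂Q) ^ (1 / p) +
            (∫⁻ ω, Wp p edist (κ₁ ω) (κ₂ ω) ^ p ∂Q) ^ (1 / p) +
            (∫⁻ ω, quantError p (denseQuantizer B N) (κ₂ ω) ^ p ∂Q) ^ (1 / p) :=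
          lintegral_Lp_add_add_le hp (measurable_quantError _ κ₁).aemeasurable W_aemeasurable
            (measurable_quantError _ κ₂).aemeasurable
      _ = quantError p (denseQuantizer B N) (κ₁ ∘ₘ Q) +
            (∫⁻ ω, Wp p edist (κ₁ ω) (κ₂ ω) ^ p ∂Q) ^ (1 / p) +
            quantError p (denseQuantizer B N) (κ₂ ∘ₘ Q) := by
          rw [quantError_comp hp, quantError_comp hp]
  refine le_of_tendsto_of_tendsto' (tendsto_Wp_map_quantize hp h₁ h₂) ?_ quantized_le
  simpa using ((tendsto_quantError hp h₁).add_const _).add (tendsto_quantError hp h₂)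

end WassersteinKernels

section Disintegration

lemma isRatStieltjesPoint_cdf (m : Measure ℝ) [IsProbabilityMeasure m] :
    IsRatStieltjesPoint (id : (ℚ → ℝ) → ℚ → ℝ) fun q : ℚ => cdf m q where
  mono _ _ hab := (cdf m).mono (Rat.cast_le.2 hab)
  tendsto_atTop_one := (tendsto_cdf_atTop m).comp (tendsto_ratCast_atTop_iff.2 tendsto_id)
  tendsto_atBot_zero := (tendsto_cdf_atBot m).comp (tendsto_ratCast_atBot_iff.2 tendsto_id)
  iInf_rat_gt_eq t := by
    rw [id, ← StieltjesFunction.iInf_rat_gt_eq]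
    exact Equiv.iInf_congr (Equiv.subtypeEquivRight fun r => by simp) fun r => rfl

lemma stieltjesOfMeasurableRat_cdf (m : Measure ℝ) [IsProbabilityMeasure m] :
    stieltjesOfMeasurableRat (id : (ℚ → ℝ) → ℚ → ℝ) measurable_id (fun q => cdf m q) = cdf m := by
  ext t
  rw [← StieltjesFunction.iInf_rat_gt_eq, ← StieltjesFunction.iInf_rat_gt_eq]
  refine iInf_congr fun r => ?_
  rw [stieltjesOfMeasurableRat_eq, toRatCDF_of_isRatStieltjesPoint (isRatStieltjesPoint_cdf m), id]

lemma exists_measurable_measure_retract (B : Type*) [MeasurableSpace B] [StandardBorelSpace B]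
    [Nonempty B] :
    ∃ (s : Measure B → ℚ → ℝ) (r : (ℚ → ℝ) → Measure B), Measurable s ∧ Measurable r ∧
      ∀ m, IsProbabilityMeasure m → r (s m) = m := by
  have embedding := measurableEmbedding_embeddingReal B
  obtain ⟨inv, inv_measurable, inv_comp⟩ :=
    embedding.exists_measurable_extend (g := (id : B → B)) measurable_id fun _ => inferInstance
  refine ⟨fun m q => (m.map (embeddingReal B)).real (Set.Iic q),
    fun x => (stieltjesOfMeasurableRat id measurable_id x).measure.map inv, ?_, ?_, fun m _ => ?_⟩
  · exact measurable_pi_lambda _ fun q => ((Measure.measurable_coe measurableSet_Iic).comp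
      (Measure.measurable_map _ embedding.measurable)).ennreal_toReal
  · exact (Measure.measurable_map inv inv_measurable).comp
      (measurable_measure_stieltjesOfMeasurableRat measurable_id)
  · have := Measure.isProbabilityMeasure_map (μ := m) embedding.measurable.aemeasurable
    simp only [← cdf_eq_real, stieltjesOfMeasurableRat_cdf]
    rw [measure_cdf, Measure.map_map inv_measurable embedding.measurable, inv_comp, Measure.map_id]

/-- `Measure B` is not a standard Borel space, so the conditional kernel is taken in a space of
distribution functions of which the probability measures are a measurable retract. -/
lemma exists_compProd_eq {T A B : Type*} [MeasurableSpace T] [MeasurableSpace A]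
    [MeasurableSpace B] [StandardBorelSpace A] [Nonempty A] [StandardBorelSpace B] [Nonempty B]
    (ρ : Measure (T × (A × Measure B))) [IsFiniteMeasure ρ]
    (h : ∀ᵐ z ∂ρ, IsProbabilityMeasure z.2.2) :
    ∃ κ : Kernel T (A × Measure B), IsMarkovKernel κ ∧ ρ.fst ⊗ₘ κ = ρ := by
  obtain ⟨s, r, hs, hr, hrs⟩ := exists_measurable_measure_retract B
  have hids : Measurable (Prod.map id s : A × Measure B → A × (ℚ → ℝ)) := measurable_id.prodMap hs
  have hidr : Measurable (Prod.map id r : A × (ℚ → ℝ) → A × Measure B) := measurable_id.prodMap hr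
  let ρ' := ρ.map (Prod.map id (Prod.map id s))
  have fst_eq : ρ'.fst = ρ.fst := Measure.map_map measurable_fst (measurable_id.prodMap hids)
  refine ⟨ρ'.condKernel.map (Prod.map id r), Kernel.IsMarkovKernel.map _ hidr, ?_⟩
  calc ρ.fst ⊗ₘ ρ'.condKernel.map (Prod.map id r)
      = ρ'.map (Prod.map id (Prod.map id r)) := by
        rw [← fst_eq, Measure.compProd_map hidr, ρ'.disintegrate ρ'.condKernel]
    _ = ρ.map fun z => (z.1, z.2.1, r (s z.2.2)) :=
        Measure.map_map (measurable_id.prodMap hidr) (measurable_id.prodMap hids)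
    _ = ρ.map id := Measure.map_congr (h.mono fun z hz => by simp only [hrs _ hz, id])
    _ = ρ := Measure.map_id

end Disintegration

section SndKernel

variable {A B : Type*} [MeasurableSpace A] [MeasurableSpace B] [Nonempty B]

open Classical in
/-- The second coordinate of `A × Measure B` as a Markov kernel; it takes an arbitrary Dirac mass as
its value where that coordinate is not a probability measure. -/
def sndKernel (A B : Type*) [MeasurableSpace A] [MeasurableSpace B] [Nonempty B] :
    Kernel (A × Measure B) B where
  toFun z := if z.2 Set.univ = 1 then z.2 else .dirac (Classical.arbitrary B)
  measurable' := by
    refine Measurable.ite ?_ measurable_snd measurable_const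
    exact (Measure.measurable_coe .univ).comp measurable_snd (measurableSet_singleton 1)

instance : IsMarkovKernel (sndKernel A B) where
  isProbabilityMeasure z := by
    change IsProbabilityMeasure (ite _ _ _)
    split_ifs with h
    exacts [⟨h⟩, inferInstance]

lemma sndKernel_apply {z : A × Measure B} (hz : IsProbabilityMeasure z.2) :
    sndKernel A B z = z.2 :=
  if_pos hz.measure_univ

lemma prodMk_sndKernel_ae_eq {Ω : Type*} [MeasurableSpace Ω] {ρ : Measure Ω}
    {f : Ω → A × Measure B} (hf : AEMeasurable f ρ)
    (h : ∀ᵐ z ∂ρ.map f, IsProbabilityMeasure z.2) :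
    (fun ω => ((f ω).1, sndKernel A B (f ω))) =ᵐ[ρ] f :=
  (ae_of_ae_map hf h).mono fun _ hω => Prod.ext rfl (sndKernel_apply hω)

end SndKernel

section LiftDist

variable {A B : Type*} [PseudoEMetricSpace A] [MetricSpace B] [MeasurableSpace B] {p : ℝ}

lemma liftDist_rpow (hp : 1 ≤ p) (u v : A × Measure B) :
    liftDist p edist edist u v ^ p = edist u.1 v.1 ^ p + Wp p edist u.2 v.2 ^ p :=
  rpow_one_div_rpow (by positivity) _

lemma liftDist_comm (u v : A × Measure B) :
    liftDist p edist edist u v = liftDist p edist edist v u := by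
  rw [liftDist, liftDist, edist_comm, Wp_comm edist_comm]

lemma AWbar_comm [MeasurableSpace A] (μ ν : Measure (A × Measure B)) :
    AWbar p edist edist μ ν = AWbar p edist edist ν μ :=
  Wp_comm liftDist_comm ..

lemma MemPpLift.ae_isProbabilityMeasure_snd [MeasurableSpace A] {μ : Measure (A × Measure B)}
    (hμ : MemPpLift p edist edist μ) : ∀ᵐ z ∂μ, IsProbabilityMeasure z.2 :=
  hμ.2.1.mono fun _ hz => hz.1

variable [SecondCountableTopology B] [BorelSpace B] [StandardBorelSpace B]

lemma liftDist_triangle (hp : 1 ≤ p) {u : A × Measure B} (v w : A × Measure B)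
    (hu : IsProbabilityMeasure u.2) :
    liftDist p edist edist u w ≤ liftDist p edist edist u v + liftDist p edist edist v w := by
  have minkowski := ENNReal.Lp_add_le Finset.univ ![edist u.1 v.1, Wp p edist u.2 v.2]
    ![edist v.1 w.1, Wp p edist v.2 w.2] hp
  simp only [Fin.sum_univ_two, Matrix.cons_val_zero, Matrix.cons_val_one] at minkowski
  refine le_trans ?_ minkowski
  unfold liftDist
  gcongr
  exacts [edist_triangle .., Wp_triangle hp ..]

variable [MeasurableSpace A] [Nonempty B]

lemma MemPpLift.memPp_sndKernel_comp (hp : 1 ≤ p) {μ : Measure (A × Measure B)}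
    (hμ : MemPpLift p edist edist μ) : MemPp p edist (sndKernel A B ∘ₘ μ) := by
  obtain ⟨_, hμ_snd, z₀, hz₀, moment_ne_top⟩ := hμ
  let b := Classical.arbitrary B
  have := hz₀.1
  have dirac_ne_top : Wp p edist (.dirac b) z₀.2 ≠ ∞ :=
    (Wp_dirac_ne_top_iff hp b).2 ((memPp_iff_lintegral_ne_top hp b).1 hz₀).2
  refine (memPp_iff_lintegral_ne_top hp b).2 ⟨inferInstance, ?_⟩
  rw [Measure.lintegral_bind (Kernel.aemeasurable _) (by fun_prop)]
  refine ne_top_of_le_ne_top (b := ∫⁻ z, 2 ^ (p - 1) *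
    (Wp p edist (.dirac b) z₀.2 ^ p + liftDist p edist edist z₀ z ^ p) ∂μ) ?_
    (lintegral_mono_ae (hμ_snd.mono fun z hz => ?_))
  · have two_pow_ne_top : (2 : ℝ≥0∞) ^ (p - 1) ≠ ∞ :=
      ENNReal.rpow_ne_top_of_nonneg (by linarith) ENNReal.ofNat_ne_top
    rw [lintegral_const_mul' _ _ two_pow_ne_top, lintegral_add_left measurable_const]
    refine ENNReal.mul_ne_top two_pow_ne_top (ENNReal.add_ne_top.2 ⟨?_, moment_ne_top⟩)
    rw [lintegral_const, measure_univ, mul_one]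
    exact ENNReal.rpow_ne_top_of_nonneg (by positivity) dirac_ne_top
  · have := hz.1
    calc ∫⁻ x, edist b x ^ p ∂sndKernel A B z
        = Wp p edist (.dirac b) z.2 ^ p := by
          rw [sndKernel_apply hz.1, Wp_dirac, rpow_one_div_rpow (by positivity)]
      _ ≤ (Wp p edist (.dirac b) z₀.2 + Wp p edist z₀.2 z.2) ^ p := by
          gcongr
          exact Wp_triangle hp ..
      _ ≤ 2 ^ (p - 1) * (Wp p edist (.dirac b) z₀.2 ^ p + Wp p edist z₀.2 z.2 ^ p) :=
          ENNReal.rpow_add_le_mul_rpow_add_rpow _ _ hp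
      _ ≤ 2 ^ (p - 1) * (Wp p edist (.dirac b) z₀.2 ^ p + liftDist p edist edist z₀ z ^ p) := by
          rw [liftDist_rpow hp]
          gcongr
          exact le_add_self

end LiftDist

section Composition

variable {B T Ω : Type*} [MeasurableSpace B] [MeasurableSpace T] [MeasurableSpace Ω]

lemma comap_comp_measure {f : Ω → T} (η : Kernel T B) (hf : Measurable f) (ρ : Measure Ω) :
    η.comap f hf ∘ₘ ρ = η ∘ₘ ρ.map f := by
  rw [← Kernel.comp_deterministic_eq_comap, ← Measure.comp_assoc,
    Measure.deterministic_comp_eq_map]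

lemma comap_snd_comp_id_prod (κ : Kernel T Ω) [IsSFiniteKernel κ]
    (η : Kernel Ω B) : η.comap Prod.snd measurable_snd ∘ₖ (Kernel.id ×ₖ κ) = η ∘ₖ κ := by
  rw [← Kernel.comp_map _ _ measurable_snd, ← Kernel.snd_eq, Kernel.snd_prod]

lemma comap_fst_comp_id_prod (κ : Kernel T Ω) [IsMarkovKernel κ]
    (η : Kernel T B) : η.comap Prod.fst measurable_fst ∘ₖ (Kernel.id ×ₖ κ) = η := by
  rw [← Kernel.comp_map _ _ measurable_fst, ← Kernel.fst_eq, Kernel.fst_prod, Kernel.comp_id]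

lemma map_id_snd_compProd_prodMkLeft (ν : Measure T) [SFinite ν] (κ : Kernel T Ω)
    [IsSFiniteKernel κ] (η : Kernel Ω B) [IsSFiniteKernel η] :
    (ν ⊗ₘ (κ ⊗ₖ η.prodMkLeft T)).map (Prod.map id Prod.snd) = ν ⊗ₘ (η ∘ₖ κ) := by
  rw [← Measure.compProd_map measurable_snd, ← Kernel.snd_eq, Kernel.snd_compProd_prodMkLeft]

lemma map_id_fst_compProd_prodMkLeft (ν : Measure T) [SFinite ν] (κ : Kernel T Ω)
    [IsSFiniteKernel κ] (η : Kernel Ω B) [IsMarkovKernel η] :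
    (ν ⊗ₘ (κ ⊗ₖ η.prodMkLeft T)).map (Prod.map id Prod.fst) = ν ⊗ₘ κ := by
  rw [← Measure.compProd_map measurable_fst, ← Kernel.fst_eq, Kernel.fst_compProd]

lemma snd_compProd_compProd_prodMkLeft (ν : Measure T) [SFinite ν] (κ : Kernel T Ω)
    [IsSFiniteKernel κ] (η : Kernel Ω B) [IsSFiniteKernel η] :
    (ν ⊗ₘ (κ ⊗ₖ η.prodMkLeft T)).snd = (κ ∘ₘ ν) ⊗ₘ η := by
  rw [Measure.snd_compProd, Kernel.compProd_prodMkLeft_eq_comp, ← Measure.comp_assoc,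
    ← Measure.compProd_eq_comp_prod]

end Composition

section LpDist

variable {Ω A B : Type*} [MeasurableSpace Ω] [PseudoEMetricSpace A] [MetricSpace B]
  [MeasurableSpace B] {p : ℝ} {ρ : Measure Ω} {u v w : Ω → A × Measure B}

/-- The `L^p` distance between two random elements of `A × Measure B`. -/
def lpDist (p : ℝ) (ρ : Measure Ω) (u v : Ω → A × Measure B) : ℝ≥0∞ :=
  (∫⁻ ω, liftDist p edist edist (u ω) (v ω) ^ p ∂ρ) ^ (1 / p)

lemma lpDist_congr {u' v' : Ω → A × Measure B} (hu : u =ᵐ[ρ] u') (hv : v =ᵐ[ρ] v') :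
    lpDist p ρ u v = lpDist p ρ u' v' := by
  rw [lpDist, lpDist, lintegral_congr_ae]
  filter_upwards [hu, hv] with ω hu hv
  rw [hu, hv]

lemma lpDist_map_swap {S T : Type*} [MeasurableSpace S] [MeasurableSpace T] (ρ : Measure (S × T))
    (u v : T × S → A × Measure B) :
    lpDist p (ρ.map Prod.swap) u v = lpDist p ρ (u ∘ Prod.swap) (v ∘ Prod.swap) := by
  rw [lpDist, lpDist]
  congr 1
  exact lintegral_map_equiv _ MeasurableEquiv.prodComm

variable [MeasurableSpace A] [SecondCountableTopology A] [BorelSpace A]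
  [SecondCountableTopology B] [BorelSpace B] [StandardBorelSpace B] [Nonempty B]

lemma aemeasurable_liftDist (hp : 1 ≤ p) (hu : Measurable u) (hv : Measurable v)
    (hu' : ∀ᵐ ω ∂ρ, MemPp p edist (u ω).2) (hv' : ∀ᵐ ω ∂ρ, MemPp p edist (v ω).2) :
    AEMeasurable (fun ω => liftDist p edist edist (u ω) (v ω)) ρ := by
  let snd_u := (sndKernel A B).comap u hu
  let snd_v := (sndKernel A B).comap v hv
  have hsnd_u : ∀ᵐ ω ∂ρ, snd_u ω = (u ω).2 := hu'.mono fun _ h => sndKernel_apply h.1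
  have hsnd_v : ∀ᵐ ω ∂ρ, snd_v ω = (v ω).2 := hv'.mono fun _ h => sndKernel_apply h.1
  have Wp_aemeasurable : AEMeasurable (fun ω => Wp p edist (u ω).2 (v ω).2) ρ := by
    refine (aemeasurable_Wp (κ₁ := snd_u) (κ₂ := snd_v) hp ?_ ?_).congr ?_
    · filter_upwards [hu', hsnd_u] with ω h e using e ▸ h
    · filter_upwards [hv', hsnd_v] with ω h e using e ▸ h
    · filter_upwards [hsnd_u, hsnd_v] with ω eu ev
      rw [eu, ev]
  exact (((hu.fst.edist hv.fst).pow_const p).aemeasurable.add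
    (Wp_aemeasurable.pow_const p)).pow_const _

lemma lpDist_map (hp : 1 ≤ p) {Ω' : Type*} [MeasurableSpace Ω'] {ρ : Measure Ω'} {f : Ω' → Ω}
    (hf : Measurable f) (hu : Measurable u) (hv : Measurable v)
    (hu' : ∀ᵐ ω ∂ρ.map f, MemPp p edist (u ω).2) (hv' : ∀ᵐ ω ∂ρ.map f, MemPp p edist (v ω).2) :
    lpDist p (ρ.map f) u v = lpDist p ρ (u ∘ f) (v ∘ f) := by
  rw [lpDist, lintegral_map' ((aemeasurable_liftDist hp hu hv hu' hv').pow_const p)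
    hf.aemeasurable]
  rfl

lemma lpDist_triangle (hp : 1 ≤ p) (hu : Measurable u) (hv : Measurable v) (hw : Measurable w)
    (hu' : ∀ᵐ ω ∂ρ, MemPp p edist (u ω).2) (hv' : ∀ᵐ ω ∂ρ, MemPp p edist (v ω).2)
    (hw' : ∀ᵐ ω ∂ρ, MemPp p edist (w ω).2) :
    lpDist p ρ u w ≤ lpDist p ρ u v + lpDist p ρ v w := by
  calc lpDist p ρ u w
      ≤ (∫⁻ ω, (liftDist p edist edist (u ω) (v ω) +
          liftDist p edist edist (v ω) (w ω)) ^ p ∂ρ) ^ (1 / p) := by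
        refine ENNReal.rpow_le_rpow (lintegral_mono_ae ?_) (by positivity)
        filter_upwards [hu'] with ω h
        gcongr
        exact liftDist_triangle hp _ _ h.1
    _ ≤ _ := ENNReal.lintegral_Lp_add_le (aemeasurable_liftDist hp hu hv hu' hv')
        (aemeasurable_liftDist hp hv hw hv' hw') hp

/-- Jensen's inequality for the jointly convex function `W_p ^ p`. -/
lemma lintegral_Wp_comp_le {T : Type*} [MeasurableSpace T] (hp : 1 ≤ p) {ν : Measure T}
    {κ : Kernel T Ω} [IsMarkovKernel κ] {η₁ η₂ : Kernel Ω B} [IsMarkovKernel η₁]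
    [IsMarkovKernel η₂] (h₁ : MemPp p edist (η₁ ∘ₘ κ ∘ₘ ν)) (h₂ : MemPp p edist (η₂ ∘ₘ κ ∘ₘ ν)) :
    ∫⁻ t, Wp p edist ((η₁ ∘ₖ κ) t) ((η₂ ∘ₖ κ) t) ^ p ∂ν ≤
      ∫⁻ ω, Wp p edist (η₁ ω) (η₂ ω) ^ p ∂(κ ∘ₘ ν) := by
  have Wp_aemeasurable := aemeasurable_Wp hp (ae_memPp_of_comp h₁) (ae_memPp_of_comp h₂)
  rw [Measure.lintegral_bind κ.aemeasurable (Wp_aemeasurable.pow_const p)]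
  rw [Measure.comp_assoc] at h₁ h₂
  refine lintegral_mono_ae ?_
  filter_upwards [ae_memPp_of_comp h₁, ae_memPp_of_comp h₂] with t ht₁ ht₂
  rw [← rpow_one_div_rpow (by positivity : p ≠ 0) (∫⁻ ω, _ ∂κ t)]
  gcongr
  rw [Kernel.comp_apply] at ht₁ ht₂ ⊢
  rw [Kernel.comp_apply]
  exact Wp_comp_le hp ht₁ ht₂

lemma lpDist_barycenter_le {T : Type*} [MeasurableSpace T] (hp : 1 ≤ p) {ν : Measure T} [SFinite ν]
    {κ : Kernel T Ω} [IsMarkovKernel κ] {a b : T × Ω → A} (ha : Measurable a) (hb : Measurable b)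
    {η₁ η₂ : Kernel (T × Ω) B} [IsMarkovKernel η₁] [IsMarkovKernel η₂]
    (h₁ : MemPp p edist (η₁ ∘ₘ (ν ⊗ₘ κ))) (h₂ : MemPp p edist (η₂ ∘ₘ (ν ⊗ₘ κ))) :
    lpDist p (ν ⊗ₘ κ) (fun w => (a w, (η₁ ∘ₖ (Kernel.id ×ₖ κ)) w.1))
        (fun w => (b w, (η₂ ∘ₖ (Kernel.id ×ₖ κ)) w.1)) ≤
      lpDist p (ν ⊗ₘ κ) (fun w => (a w, η₁ w)) (fun w => (b w, η₂ w)) := by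
  have edist_measurable : Measurable fun w => edist (a w) (b w) ^ p := (ha.edist hb).pow_const p
  rw [Measure.compProd_eq_comp_prod] at h₁ h₂
  have jensen := lintegral_Wp_comp_le hp h₁ h₂
  rw [Measure.comp_assoc] at h₁ h₂
  have Wp_aemeasurable := aemeasurable_Wp hp (ae_memPp_of_comp h₁) (ae_memPp_of_comp h₂)
  have fst_eq : (ν ⊗ₘ κ).map Prod.fst = ν := Measure.fst_compProd ν κ
  simp only [lpDist, liftDist_rpow hp]
  rw [lintegral_add_left edist_measurable, lintegral_add_left edist_measurable]
  refine ENNReal.rpow_le_rpow (add_le_add_right ?_ _) (by positivity)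
  calc ∫⁻ w, Wp p edist ((η₁ ∘ₖ (Kernel.id ×ₖ κ)) w.1) ((η₂ ∘ₖ (Kernel.id ×ₖ κ)) w.1) ^ p
        ∂(ν ⊗ₘ κ)
      = ∫⁻ t, Wp p edist ((η₁ ∘ₖ (Kernel.id ×ₖ κ)) t) ((η₂ ∘ₖ (Kernel.id ×ₖ κ)) t) ^ p ∂ν := by
        conv_rhs => rw [← fst_eq]
        symm
        refine lintegral_map' ?_ (by fun_prop)
        rw [fst_eq]
        exact Wp_aemeasurable.pow_const p
    _ ≤ ∫⁻ w, Wp p edist (η₁ w) (η₂ w) ^ p ∂(ν ⊗ₘ κ) := by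
        rw [Measure.compProd_eq_comp_prod]
        exact jensen

end LpDist

section CouplingKernels

variable {A B : Type*} [MeasurableSpace A] [MeasurableSpace B]

lemma swap_compProd_mem_Cpl {S T : Type*} [MeasurableSpace S] [MeasurableSpace T]
    (ν : Measure S) [SFinite ν] (κ : Kernel S T) [IsMarkovKernel κ] :
    (ν ⊗ₘ κ).map Prod.swap ∈ Cpl (κ ∘ₘ ν) ν :=
  map_swap_mem_Cpl ⟨Measure.fst_compProd ν κ, Measure.snd_compProd ν κ⟩

lemma exists_kernel_of_mem_Cpl [StandardBorelSpace A] [Nonempty A] [StandardBorelSpace B]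
    [Nonempty B] {T : Type*} [MeasurableSpace T] {μ : Measure (A × Measure B)} {ν : Measure T}
    [IsProbabilityMeasure μ] (hμ : ∀ᵐ z ∂μ, IsProbabilityMeasure z.2)
    {γ : Measure ((A × Measure B) × T)} (hγ : γ ∈ Cpl μ ν) :
    ∃ κ : Kernel T (A × Measure B), IsMarkovKernel κ ∧ κ ∘ₘ ν = μ ∧
      (ν ⊗ₘ κ).map Prod.swap = γ := by
  obtain ⟨fst_eq, snd_eq⟩ := map_swap_mem_Cpl hγ
  have := Cpl.isProbabilityMeasure hγ
  obtain ⟨κ, hκ, compProd_eq⟩ := exists_compProd_eq (γ.map Prod.swap)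
    (ae_of_ae_map (p := fun z : A × Measure B => IsProbabilityMeasure z.2)
      measurable_snd.aemeasurable (by rwa [snd_eq]))
  rw [Measure.fst, fst_eq] at compProd_eq
  have : SFinite ν := fst_eq ▸ inferInstance
  refine ⟨κ, hκ, ?_, ?_⟩
  · rw [← Measure.snd_compProd, compProd_eq, Measure.snd, snd_eq]
  · rw [compProd_eq, Measure.map_map measurable_swap measurable_swap, Prod.swap_swap_eq,
      Measure.map_id]

variable {γ : Measure ((A × Measure B) × (A × Measure B))}

lemma IsCondBar.ae_eq [IsFiniteMeasure γ] [MeasurableSpace.CountablyGenerated B]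
    {η₁ η₂ : (A × Measure B) × (A × Measure B) → Measure B} (h₁ : IsCondBar γ η₁)
    (h₂ : IsCondBar γ η₂) : η₁ =ᵐ[γ] η₂ := by
  obtain ⟨⟨g₁, g₁_measurable, hg₁⟩, prob₁, integral₁⟩ := h₁
  obtain ⟨⟨g₂, g₂_measurable, hg₂⟩, prob₂, integral₂⟩ := h₂
  obtain rfl := funext hg₁
  obtain rfl := funext hg₂
  let κ₁ : Kernel (A × Measure B) B := ⟨g₁, g₁_measurable⟩
  let κ₂ : Kernel (A × Measure B) B := ⟨g₂, g₂_measurable⟩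
  have : IsMarkovKernel κ₁ := ⟨fun y => prob₁ (y, y)⟩
  have : IsMarkovKernel κ₂ := ⟨fun y => prob₂ (y, y)⟩
  have compProd_eq : γ.snd ⊗ₘ κ₁ = γ.snd ⊗ₘ κ₂ := Measure.ext_prod fun {S E} hS hE => by
    have integral_eq := (integral₁ S hS E hE).trans (integral₂ S hS E hE).symm
    rw [Measure.compProd_apply_prod hS hE, Measure.compProd_apply_prod hS hE, Measure.snd,
      setLIntegral_map hS (κ₁.measurable_coe hE) measurable_snd,
      setLIntegral_map hS (κ₂.measurable_coe hE) measurable_snd]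
    exact integral_eq
  filter_upwards [ae_of_ae_map measurable_snd.aemeasurable
    (Kernel.ae_eq_of_compProd_eq compProd_eq)] with z hz
  exact hz

lemma isCondBar_comp [Nonempty B] {ν : Measure (A × Measure B)} [SFinite ν]
    {κ : Kernel (A × Measure B) (A × Measure B)} [IsMarkovKernel κ]
    (h : ∀ᵐ z ∂(κ ∘ₘ ν), IsProbabilityMeasure z.2) :
    IsCondBar ((ν ⊗ₘ κ).map Prod.swap) fun z => (sndKernel A B ∘ₖ κ) z.2 := by
  refine ⟨⟨_, Kernel.measurable _, fun _ => rfl⟩, fun _ => inferInstance, fun S hS E hE => ?_⟩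
  have h' : ∀ᵐ z ∂(ν ⊗ₘ κ).map Prod.swap, sndKernel A B z.1 = z.1.2 := by
    rw [← (swap_compProd_mem_Cpl ν κ).1] at h
    exact (ae_of_ae_map measurable_fst.aemeasurable h).mono fun _ => sndKernel_apply
  have hS' : MeasurableSet (Prod.snd ⁻¹' S : Set ((A × Measure B) × (A × Measure B))) :=
    measurable_snd hS
  have swap_preimage : Prod.swap ⁻¹' (Prod.snd ⁻¹' S) =
      S ×ˢ (Set.univ : Set (A × Measure B)) := by ext; simp
  calc ∫⁻ z in Prod.snd ⁻¹' S, (sndKernel A B ∘ₖ κ) z.2 E ∂(ν ⊗ₘ κ).map Prod.swap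
      = ∫⁻ y in S, (sndKernel A B ∘ₖ κ) y E ∂ν := by
        rw [← (swap_compProd_mem_Cpl ν κ).2, setLIntegral_map hS (Kernel.measurable_coe _ hE)
          measurable_snd, (swap_compProd_mem_Cpl ν κ).2]
    _ = ∫⁻ y in S, ∫⁻ x, sndKernel A B x E ∂κ y ∂ν := by
        simp only [Kernel.comp_apply' _ _ _ hE]
    _ = ∫⁻ z in Prod.snd ⁻¹' S, sndKernel A B z.1 E ∂(ν ⊗ₘ κ).map Prod.swap := by
        have := Kernel.measurable_coe (sndKernel A B) hE
        rw [setLIntegral_map hS' (by fun_prop) measurable_swap, swap_preimage,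
          Measure.setLIntegral_compProd (by fun_prop) hS .univ]
        simp only [Prod.fst_swap, Measure.restrict_univ]
    _ = ∫⁻ z in Prod.snd ⁻¹' S, z.1.2 E ∂(ν ⊗ₘ κ).map Prod.swap :=
        lintegral_congr_ae (ae_restrict_of_ae (h'.mono fun _ hz => congrArg (· E) hz))

end CouplingKernels

section Costs

variable {A B : Type*} [PseudoEMetricSpace A] [MeasurableSpace A] [MetricSpace B]
  [MeasurableSpace B] {p : ℝ} {μ ν : Measure (A × Measure B)}

/-- The Markov kernels which transport `ν` to `μ`; together with `ν` they disintegrate the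
couplings of `μ` and `ν` along their second marginal. -/
def transportKernels {S T : Type*} [MeasurableSpace S] [MeasurableSpace T] (ν : Measure S)
    (μ : Measure T) : Set (Kernel S T) :=
  {κ | IsMarkovKernel κ ∧ κ ∘ₘ ν = μ}

/-- The cost that `AWbar` assigns to the coupling under which `ν` is the law of `Y⃗` and `κ` the
conditional law of `(X₁, X̂₂)` given `Y⃗`. -/
def adaptedCost (p : ℝ) (ν : Measure (A × Measure B))
    (κ : Kernel (A × Measure B) (A × Measure B)) : ℝ≥0∞ :=
  lpDist p (ν ⊗ₘ κ) Prod.snd Prod.fst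

lemma CWbar_eq_iInf_lpDist (hp : 1 ≤ p) (μ ν : Measure (A × Measure B)) :
    CWbar p edist edist μ ν = ⨅ γ ∈ Cpl μ ν, ⨅ η ∈ {η | IsCondBar γ η},
      lpDist p γ (fun z => (z.1.1, η z)) Prod.snd := by
  simp only [CWbar, lpDist, liftDist_rpow hp]

lemma adaptedCost_eq_lpDist_swap (p : ℝ) (ν : Measure (A × Measure B))
    (κ : Kernel (A × Measure B) (A × Measure B)) :
    adaptedCost p ν κ = lpDist p ((ν ⊗ₘ κ).map Prod.swap) Prod.fst Prod.snd := by
  rw [lpDist_map_swap]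
  rfl

variable [Nonempty B]

/-- The cost that `CWbar` assigns to the coupling under which `ν` is the law of `Y⃗` and `κ` the
conditional law of `(X₁, X̂₂)` given `Y⃗`. -/
def causalCost (p : ℝ) (ν : Measure (A × Measure B))
    (κ : Kernel (A × Measure B) (A × Measure B)) : ℝ≥0∞ :=
  lpDist p (ν ⊗ₘ κ) (fun w => (w.2.1, (sndKernel A B ∘ₖ κ) w.1)) Prod.fst

lemma causalCost_eq_lpDist_swap (p : ℝ) (ν : Measure (A × Measure B))
    (κ : Kernel (A × Measure B) (A × Measure B)) :
    causalCost p ν κ = lpDist p ((ν ⊗ₘ κ).map Prod.swap)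
      (fun z => (z.1.1, (sndKernel A B ∘ₖ κ) z.2)) Prod.snd := by
  rw [lpDist_map_swap]
  rfl

variable [StandardBorelSpace A] [Nonempty A] [StandardBorelSpace B] [IsProbabilityMeasure μ]

lemma AWbar_eq_iInf_adaptedCost (hμ : ∀ᵐ z ∂μ, IsProbabilityMeasure z.2) [SFinite ν] :
    AWbar p edist edist μ ν = ⨅ κ ∈ transportKernels ν μ, adaptedCost p ν κ := by
  refine le_antisymm (le_iInf₂ ?_) (le_iInf₂ fun γ hγ => ?_)
  · rintro κ ⟨_, rfl⟩
    exact (iInf₂_le _ (swap_compProd_mem_Cpl ν κ)).trans_eq (adaptedCost_eq_lpDist_swap p ν κ).symm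
  · obtain ⟨κ, hκ, comp_eq, rfl⟩ := exists_kernel_of_mem_Cpl hμ hγ
    exact (iInf₂_le κ ⟨hκ, comp_eq⟩).trans_eq (adaptedCost_eq_lpDist_swap p ν κ)

lemma CWbar_eq_iInf_causalCost (hp : 1 ≤ p) (hμ : ∀ᵐ z ∂μ, IsProbabilityMeasure z.2)
    [IsFiniteMeasure ν] :
    CWbar p edist edist μ ν = ⨅ κ ∈ transportKernels ν μ, causalCost p ν κ := by
  rw [CWbar_eq_iInf_lpDist hp]
  refine le_antisymm (le_iInf₂ ?_) (le_iInf₂ fun γ hγ => le_iInf₂ fun η hη => ?_)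
  · rintro κ ⟨_, rfl⟩
    exact iInf₂_le_of_le _ (swap_compProd_mem_Cpl ν κ) <|
      iInf₂_le_of_le _ (isCondBar_comp hμ) (causalCost_eq_lpDist_swap p ν κ).ge
  · obtain ⟨κ, hκ, comp_eq, rfl⟩ := exists_kernel_of_mem_Cpl hμ hγ
    have barycenter_ae_eq := (isCondBar_comp (comp_eq.symm ▸ hμ)).ae_eq hη
    refine (iInf₂_le κ ⟨hκ, comp_eq⟩).trans_eq ((causalCost_eq_lpDist_swap p ν κ).trans ?_)
    exact lpDist_congr (barycenter_ae_eq.mono fun z => congrArg (z.1.1, ·)) .rfl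

end Costs

section Inequalities

variable {A B : Type*}
  [PseudoEMetricSpace A] [SecondCountableTopology A] [MeasurableSpace A] [BorelSpace A]
  [MetricSpace B] [SecondCountableTopology B] [MeasurableSpace B] [BorelSpace B]
  [StandardBorelSpace B] [Nonempty B] {p : ℝ} {μ₁ μ₂ μ₃ ν : Measure (A × Measure B)}
  {κ : Kernel (A × Measure B) (A × Measure B)}

lemma causalCost_eq_lpDist (hp : 1 ≤ p) {Ω : Type*} [MeasurableSpace Ω] {ρ : Measure Ω}
    {f : Ω → (A × Measure B) × (A × Measure B)} (hf : Measurable f)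
    (hμ : MemPpLift p edist edist (κ ∘ₘ ν)) (hν : MemPpLift p edist edist ν) [IsMarkovKernel κ]
    (map_eq : ρ.map f = ν ⊗ₘ κ) :
    causalCost p ν κ = lpDist p ρ (fun ω => ((f ω).2.1, (sndKernel A B ∘ₖ κ) (f ω).1))
      (fun ω => (f ω).1) := by
  have := hν.1
  have fst_eq : (ν ⊗ₘ κ).map Prod.fst = ν := Measure.fst_compProd ν κ
  have barycenter_memPp : ∀ᵐ z ∂ν, MemPp p edist ((sndKernel A B ∘ₖ κ) z) :=
    ae_memPp_of_comp (Measure.comp_assoc ▸ hμ.memPp_sndKernel_comp hp)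
  have barycenter_measurable := (sndKernel A B ∘ₖ κ).measurable
  rw [← fst_eq] at barycenter_memPp
  rw [causalCost, ← map_eq]
  refine lpDist_map hp hf (by fun_prop) measurable_fst ?_ ?_ <;> rw [map_eq]
  · exact ae_of_ae_map measurable_fst.aemeasurable barycenter_memPp
  · exact ae_of_ae_map measurable_fst.aemeasurable (fst_eq.symm ▸ hν.2.1)

lemma causalCost_le_adaptedCost (hp : 1 ≤ p) [IsMarkovKernel κ]
    (hμ : MemPpLift p edist edist (κ ∘ₘ ν)) (hν : MemPpLift p edist edist ν) :
    causalCost p ν κ ≤ adaptedCost p ν κ := by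
  have := hν.1
  have fst_eq : (ν ⊗ₘ κ).map Prod.fst = ν := Measure.fst_compProd ν κ
  have snd_eq : (ν ⊗ₘ κ).map Prod.snd = κ ∘ₘ ν := Measure.snd_compProd ν κ
  have fst_ae_eq : (fun w => (w.1.1, sndKernel A B w.1)) =ᵐ[ν ⊗ₘ κ] Prod.fst :=
    prodMk_sndKernel_ae_eq measurable_fst.aemeasurable
      (fst_eq.symm ▸ hν.ae_isProbabilityMeasure_snd)
  have snd_ae_eq : (fun w => (w.2.1, sndKernel A B w.2)) =ᵐ[ν ⊗ₘ κ] Prod.snd :=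
    prodMk_sndKernel_ae_eq measurable_snd.aemeasurable
      (snd_eq.symm ▸ hμ.ae_isProbabilityMeasure_snd)
  have barycenter_le := lpDist_barycenter_le hp (ν := ν) (κ := κ) (a := fun w => w.2.1)
    (b := fun w => w.1.1) (by fun_prop) (by fun_prop)
    (η₁ := (sndKernel A B).comap Prod.snd measurable_snd)
    (η₂ := (sndKernel A B).comap Prod.fst measurable_fst)
    (by rw [comap_comp_measure, snd_eq]; exact hμ.memPp_sndKernel_comp hp)
    (by rw [comap_comp_measure, fst_eq]; exact hν.memPp_sndKernel_comp hp)
  rw [comap_snd_comp_id_prod, comap_fst_comp_id_prod] at barycenter_le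
  calc causalCost p ν κ
      = lpDist p (ν ⊗ₘ κ) (fun w => (w.2.1, (sndKernel A B ∘ₖ κ) w.1))
          (fun w => (w.1.1, sndKernel A B w.1)) := lpDist_congr .rfl fst_ae_eq.symm
    _ ≤ lpDist p (ν ⊗ₘ κ) (fun w => (w.2.1, sndKernel A B w.2))
          (fun w => (w.1.1, sndKernel A B w.1)) := barycenter_le
    _ = adaptedCost p ν κ := lpDist_congr snd_ae_eq fst_ae_eq

lemma lpDist_comp_barycenter_le_causalCost (hp : 1 ≤ p)
    {κ₁ κ₂ : Kernel (A × Measure B) (A × Measure B)} [IsMarkovKernel κ₁] [IsMarkovKernel κ₂]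
    [SFinite ν] (hμ₁ : MemPpLift p edist edist (κ₁ ∘ₘ κ₂ ∘ₘ ν))
    (hμ₂ : MemPpLift p edist edist (κ₂ ∘ₘ ν)) :
    lpDist p (ν ⊗ₘ (κ₂ ⊗ₖ κ₁.prodMkLeft (A × Measure B)))
        (fun w => (w.2.2.1, (sndKernel A B ∘ₖ (κ₁ ∘ₖ κ₂)) w.1))
        (fun w => (w.2.1.1, (sndKernel A B ∘ₖ κ₂) w.1)) ≤
      causalCost p (κ₂ ∘ₘ ν) κ₁ := by
  set L := κ₂ ⊗ₖ κ₁.prodMkLeft (A × Measure B)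
  let b₁ := sndKernel A B ∘ₖ κ₁
  have fst_L : L.map Prod.fst = κ₂ := by rw [← Kernel.fst_eq, Kernel.fst_compProd]
  have map_snd_eq : (ν ⊗ₘ L).map Prod.snd = (κ₂ ∘ₘ ν) ⊗ₘ κ₁ :=
    snd_compProd_compProd_prodMkLeft ν κ₂ κ₁
  have middle_eq : ((ν ⊗ₘ L).map Prod.snd).map Prod.fst = κ₂ ∘ₘ ν := by
    have := hμ₂.1
    rw [map_snd_eq]
    exact Measure.fst_compProd _ _
  have middle_ae_eq : (fun v => (v.1.1, sndKernel A B v.1)) =ᵐ[(ν ⊗ₘ L).map Prod.snd] Prod.fst :=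
    prodMk_sndKernel_ae_eq measurable_fst.aemeasurable
      (middle_eq.symm ▸ hμ₂.ae_isProbabilityMeasure_snd)
  have barycenter_le := lpDist_barycenter_le hp (ν := ν) (κ := L) (a := fun w => w.2.2.1)
    (b := fun w => w.2.1.1) (by fun_prop) (by fun_prop)
    (η₁ := (b₁.comap Prod.fst measurable_fst).comap Prod.snd measurable_snd)
    (η₂ := ((sndKernel A B).comap Prod.fst measurable_fst).comap Prod.snd measurable_snd)
    (by rw [comap_comp_measure, comap_comp_measure, middle_eq, ← Measure.comp_assoc]
        exact hμ₁.memPp_sndKernel_comp hp)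
    (by rw [comap_comp_measure, comap_comp_measure, middle_eq]
        exact hμ₂.memPp_sndKernel_comp hp)
  rw [comap_snd_comp_id_prod, comap_snd_comp_id_prod, ← Kernel.comp_map _ _ measurable_fst,
    ← Kernel.comp_map _ _ measurable_fst, fst_L, Kernel.comp_assoc] at barycenter_le
  refine barycenter_le.trans_eq ?_
  rw [causalCost_eq_lpDist hp measurable_snd hμ₁ hμ₂ map_snd_eq]
  exact lpDist_congr .rfl (ae_of_ae_map measurable_snd.aemeasurable middle_ae_eq)

lemma causalCost_comp_le (hp : 1 ≤ p) {κ₁ κ₂ : Kernel (A × Measure B) (A × Measure B)}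
    [IsMarkovKernel κ₁] [IsMarkovKernel κ₂] (hμ₁ : MemPpLift p edist edist (κ₁ ∘ₘ κ₂ ∘ₘ ν))
    (hμ₂ : MemPpLift p edist edist (κ₂ ∘ₘ ν)) (hν : MemPpLift p edist edist ν) :
    causalCost p ν (κ₁ ∘ₖ κ₂) ≤ causalCost p (κ₂ ∘ₘ ν) κ₁ + causalCost p ν κ₂ := by
  have := hν.1
  let Γ := ν ⊗ₘ (κ₂ ⊗ₖ κ₁.prodMkLeft (A × Measure B))
  have fst_eq : Γ.map Prod.fst = ν := Measure.fst_compProd ν _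
  have memPp_comp {κ : Kernel (A × Measure B) (A × Measure B)} [IsMarkovKernel κ]
      (h : MemPpLift p edist edist (κ ∘ₘ ν)) :
      ∀ᵐ w ∂Γ, MemPp p edist ((sndKernel A B ∘ₖ κ) w.1) := by
    refine ae_of_ae_map measurable_fst.aemeasurable (ae_memPp_of_comp ?_)
    rw [fst_eq, ← Measure.comp_assoc]
    exact h.memPp_sndKernel_comp hp
  have b₁₂_measurable := (sndKernel A B ∘ₖ (κ₁ ∘ₖ κ₂)).measurable
  have b₂_measurable := (sndKernel A B ∘ₖ κ₂).measurable
  have cost₁ := lpDist_comp_barycenter_le_causalCost hp hμ₁ hμ₂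
  rw [Measure.comp_assoc] at hμ₁
  have cost₁₂ := causalCost_eq_lpDist hp (measurable_id.prodMap measurable_snd) hμ₁ hν
    (map_id_snd_compProd_prodMkLeft ν κ₂ κ₁)
  have cost₂ := causalCost_eq_lpDist hp (measurable_id.prodMap measurable_fst) hμ₂ hν
    (map_id_fst_compProd_prodMkLeft ν κ₂ κ₁)
  have triangle := lpDist_triangle (ρ := Γ) hp
    (u := fun w => (w.2.2.1, (sndKernel A B ∘ₖ (κ₁ ∘ₖ κ₂)) w.1))
    (v := fun w => (w.2.1.1, (sndKernel A B ∘ₖ κ₂) w.1)) (w := Prod.fst)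
    (by fun_prop) (by fun_prop) measurable_fst (memPp_comp hμ₁) (memPp_comp hμ₂)
    (ae_of_ae_map measurable_fst.aemeasurable (fst_eq.symm ▸ hν.2.1))
  rw [cost₁₂, cost₂]
  exact triangle.trans (add_le_add_left cost₁ _)

variable [StandardBorelSpace A] [Nonempty A]

lemma CWbar_le_AWbar (hp : 1 ≤ p) (hμ : MemPpLift p edist edist μ₁)
    (hν : MemPpLift p edist edist ν) :
    CWbar p edist edist μ₁ ν ≤ AWbar p edist edist μ₁ ν := by
  have := hμ.1
  have := hν.1
  rw [CWbar_eq_iInf_causalCost hp hμ.ae_isProbabilityMeasure_snd,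
    AWbar_eq_iInf_adaptedCost hμ.ae_isProbabilityMeasure_snd]
  refine iInf₂_mono fun κ hκ => ?_
  obtain ⟨_, rfl⟩ := hκ
  exact causalCost_le_adaptedCost hp hμ hν

lemma CWbar_triangle (hp : 1 ≤ p) (h₁ : MemPpLift p edist edist μ₁)
    (h₂ : MemPpLift p edist edist μ₂) (h₃ : MemPpLift p edist edist μ₃) :
    CWbar p edist edist μ₁ μ₃ ≤ CWbar p edist edist μ₁ μ₂ + CWbar p edist edist μ₂ μ₃ := by
  have := h₁.1
  have := h₂.1
  have := h₃.1
  rw [CWbar_eq_iInf_causalCost hp h₁.ae_isProbabilityMeasure_snd,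
    CWbar_eq_iInf_causalCost hp h₁.ae_isProbabilityMeasure_snd,
    CWbar_eq_iInf_causalCost hp h₂.ae_isProbabilityMeasure_snd]
  refine ENNReal.le_iInf₂_add_iInf₂ ?_
  rintro κ₁ ⟨_, rfl⟩ κ₂ ⟨_, rfl⟩
  exact iInf₂_le_of_le (κ₁ ∘ₖ κ₂) ⟨inferInstance, Measure.comp_assoc.symm⟩
    (causalCost_comp_le hp h₁ h₂ h₃)

lemma CWbar_le_CWbar_add_AWbar {μ ν μ' ν' : Measure (A × Measure B)} (hp : 1 ≤ p)
    (hμ : MemPpLift p edist edist μ) (hν : MemPpLift p edist edist ν)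
    (hμ' : MemPpLift p edist edist μ') (hν' : MemPpLift p edist edist ν') :
    CWbar p edist edist μ ν ≤
      CWbar p edist edist μ' ν' + (AWbar p edist edist μ μ' + AWbar p edist edist ν ν') :=
  calc CWbar p edist edist μ ν
      ≤ CWbar p edist edist μ μ' + CWbar p edist edist μ' ν :=
        CWbar_triangle hp hμ hμ' hν
    _ ≤ CWbar p edist edist μ μ' + (CWbar p edist edist μ' ν' + CWbar p edist edist ν' ν) := by
        gcongr
        exact CWbar_triangle hp hμ' hν' hν
    _ ≤ AWbar p edist edist μ μ' + (CWbar p edist edist μ' ν' + AWbar p edist edist ν' ν) := by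
        gcongr
        exacts [CWbar_le_AWbar hp hμ hμ', CWbar_le_AWbar hp hν' hν]
    _ = CWbar p edist edist μ' ν' + (AWbar p edist edist μ μ' + AWbar p edist edist ν ν') := by
        rw [AWbar_comm ν' ν]
        ring

end Inequalities

theorem CWbar_uniformly_continuous_general {A B : Type*}
    [PseudoEMetricSpace A] [SecondCountableTopology A] [MeasurableSpace A] [BorelSpace A]
    [StandardBorelSpace A] [MetricSpace B] [SecondCountableTopology B] [MeasurableSpace B]
    [BorelSpace B] [StandardBorelSpace B] {p : ℝ} (hp : 1 ≤ p) {μ ν μ' ν' : Measure (A × Measure B)}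
    (hμ : MemPpLift p edist edist μ) (hν : MemPpLift p edist edist ν)
    (hμ' : MemPpLift p edist edist μ') (hν' : MemPpLift p edist edist ν') :
    CWbar p edist edist μ ν ≤
        CWbar p edist edist μ' ν' + (AWbar p edist edist μ μ' + AWbar p edist edist ν ν') ∧
    CWbar p edist edist μ' ν' ≤
        CWbar p edist edist μ ν + (AWbar p edist edist μ μ' + AWbar p edist edist ν ν') := by
  have ⟨_, _, z, ⟨_, _⟩, _⟩ := hμ
  have : Nonempty A := ⟨z.1⟩
  have : Nonempty B := nonempty_of_isProbabilityMeasure z.2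
  refine ⟨CWbar_le_CWbar_add_AWbar hp hμ hν hμ' hν', ?_⟩
  rw [AWbar_comm μ μ', AWbar_comm ν ν']
  exact CWbar_le_CWbar_add_AWbar hp hμ' hν' hμ hν

/-- **Lemma 4.7 (uniform continuity).**
`|CW̄_p(μ, ν) − CW̄_p(μ', ν')| ≤ AW̄_p(μ, μ') + AW̄_p(ν, ν')`, stated as the
corresponding pair of one-sided inequalities. -/
theorem CWbar_uniformly_continuous
    {X1 X2 : Type} [MetricSpace X1] [CompleteSpace X1] [SecondCountableTopology X1]
    [MeasurableSpace X1] [BorelSpace X1] [Nonempty X1]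
    [MetricSpace X2] [CompleteSpace X2] [SecondCountableTopology X2]
    [MeasurableSpace X2] [BorelSpace X2] [Nonempty X2]
    (p : ℝ) (hp : 1 ≤ p)
    (μ ν μ' ν' : Measure (X1 × Measure X2))
    (hμ : MemPpLift p (edist : X1 → X1 → ℝ≥0∞) (edist : X2 → X2 → ℝ≥0∞) μ)
    (hν : MemPpLift p (edist : X1 → X1 → ℝ≥0∞) (edist : X2 → X2 → ℝ≥0∞) ν)
    (hμ' : MemPpLift p (edist : X1 → X1 → ℝ≥0∞) (edist : X2 → X2 → ℝ≥0∞) μ')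
    (hν' : MemPpLift p (edist : X1 → X1 → ℝ≥0∞) (edist : X2 → X2 → ℝ≥0∞) ν') :
    CWbar p (edist : X1 → X1 → ℝ≥0∞) (edist : X2 → X2 → ℝ≥0∞) μ ν ≤
        CWbar p edist edist μ' ν' + (AWbar p edist edist μ μ' + AWbar p edist edist ν ν') ∧
    CWbar p (edist : X1 → X1 → ℝ≥0∞) (edist : X2 → X2 → ℝ≥0∞) μ' ν' ≤
        CWbar p edist edist μ ν + (AWbar p edist edist μ μ' + AWbar p edist edist ν ν') :=
  CWbar_uniformly_continuous_general hp hμ hν hμ' hν'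

end AWPaper
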